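/- arXiv:1412.6456 — 2 statements merged into one kernel-verified Lean document; each statement's English description precedes it below -/
import Mathlib

section
/- Let R be a local complete intersection and M, N finitely generated R-modules such that Tor_i^R(M,N) = 0 for all i ≥ 1. Then the depth formula holds: depth(M) + depth(N) = depth(R) + depth(M ⊗_R N) (with the convention depth(0) = ∞). -/
open RingTheory.Sequence CategoryTheory

universe u

noncomputable section

/-- Depth of a module: supremum of lengths of weakly regular sequences consisting of nonunits.
For a f.g. module over a noetherian local ring this is the usual depth, and the zero module
has depth `⊤`. -/
def rdepth (A : Type u) [CommRing A] (M : Type u) [AddCommGroup M] [Module A M] : ℕ∞ :=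
  sSup {n : ℕ∞ | ∃ rs : List A, (rs.length : ℕ∞) = n ∧ (∀ r ∈ rs, r ∈ nonunits A) ∧
    RingTheory.Sequence.IsWeaklyRegular M rs}

/-- Serre's condition `(S_n)`. -/
def SerreCond (R : Type u) [CommRing R] (M : Type u) [AddCommGroup M] [Module R M] (n : ℕ) :
    Prop :=
  ∀ (p : Ideal R) (hp : p.IsPrime), Nontrivial (LocalizedModule p.primeCompl M) →
    min (n : ℕ∞) (Order.height (⟨p, hp⟩ : PrimeSpectrum R)) ≤
      rdepth (Localization.AtPrime p) (LocalizedModule p.primeCompl M)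

/-- `Tor_i^R(M, N)` as an object of `ModuleCat R`. -/
def TorModCat (R : Type u) [CommRing R] (i : ℕ) (M N : Type u) [AddCommGroup M] [Module R M]
    [AddCommGroup N] [Module R N] : ModuleCat.{u} R :=
  ((Tor (ModuleCat.{u} R) i).obj (ModuleCat.of R M)).obj (ModuleCat.of R N)

/-- `Tor_i^R(M, N)` as a type (with its `R`-module structure given by instances below). -/
def TorM (R : Type u) [CommRing R] (i : ℕ) (M N : Type u) [AddCommGroup M] [Module R M]
    [AddCommGroup N] [Module R N] : Type u :=
  TorModCat R i M N

instance (R : Type u) [CommRing R] (i : ℕ) (M N : Type u) [AddCommGroup M] [Module R M]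
    [AddCommGroup N] [Module R N] : AddCommGroup (TorM R i M N) :=
  inferInstanceAs (AddCommGroup (TorModCat R i M N))

instance (R : Type u) [CommRing R] (i : ℕ) (M N : Type u) [AddCommGroup M] [Module R M]
    [AddCommGroup N] [Module R N] : Module R (TorM R i M N) :=
  inferInstanceAs (Module R (TorModCat R i M N))

/-- A regular local ring: noetherian local, whose maximal ideal is generated by a
(weakly) regular sequence. -/
def IsRegLocal (Q : Type u) [CommRing Q] : Prop :=
  IsNoetherianRing Q ∧ IsLocalRing Q ∧
    ∃ rs : List Q, RingTheory.Sequence.IsWeaklyRegular Q rs ∧ (∀ r ∈ rs, r ∈ nonunits Q) ∧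
      Ideal.span {x | x ∈ rs} = Ideal.span (nonunits Q)

/-- A (local) complete intersection: noetherian local ring whose completion is a regular
local ring modulo a regular sequence (of nonunits). -/
def IsCIRing (R : Type u) [CommRing R] : Prop :=
  IsNoetherianRing R ∧ IsLocalRing R ∧
    ∃ (Q : Type u) (_ : CommRing Q), IsRegLocal Q ∧
      ∃ rs : List Q, (∀ r ∈ rs, r ∈ nonunits Q) ∧ RingTheory.Sequence.IsWeaklyRegular Q rs ∧
        Nonempty ((Q ⧸ Ideal.span {x | x ∈ rs}) ≃+* AdicCompletion (Ideal.span (nonunits R)) R)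

/-- A hypersurface: noetherian local ring whose completion is a regular local ring modulo
a single non-zerodivisor in the maximal ideal. -/
def IsHypersurfaceRing (R : Type u) [CommRing R] : Prop :=
  IsNoetherianRing R ∧ IsLocalRing R ∧
    ∃ (Q : Type u) (_ : CommRing Q), IsRegLocal Q ∧
      ∃ f : Q, f ∈ nonunits Q ∧ f ∈ nonZeroDivisors Q ∧
        Nonempty ((Q ⧸ Ideal.span {f}) ≃+* AdicCompletion (Ideal.span (nonunits R)) R)

/-- Maximal Cohen-Macaulay module over a local ring: depth equals the Krull dimension. -/
def IsMCM (R : Type u) [CommRing R] (M : Type u) [AddCommGroup M] [Module R M] : Prop :=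
  (rdepth R M : WithBot ℕ∞) = ringKrullDim R

/-- Cohen-Macaulay local ring. -/
def IsCMLocalRing (A : Type u) [CommRing A] : Prop :=
  IsNoetherianRing A ∧ IsLocalRing A ∧ (rdepth A A : WithBot ℕ∞) = ringKrullDim A

/-- `M` has (constant) rank: free of the same rank at every minimal prime. -/
def HasRank (R : Type u) [CommRing R] (M : Type u) [AddCommGroup M] [Module R M] : Prop :=
  ∃ r : ℕ, ∀ (p : Ideal R) (hp : p.IsPrime), p ∈ minimalPrimes R →
    Nonempty ((LocalizedModule (@Ideal.primeCompl R _ p hp) M)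
      ≃ₗ[Localization (@Ideal.primeCompl R _ p hp)]
      (Fin r → Localization (@Ideal.primeCompl R _ p hp)))

/-- Projective dimension at most `n`. -/
def pdLE (R : Type u) [CommRing R] : ℕ → ∀ (M : Type u) [AddCommGroup M] [Module R M], Prop
  | 0, M, _, _ => Module.Projective R M
  | n+1, M, _, _ => ∃ (P : Type u) (_ : AddCommGroup P) (_ : Module R P),
      Module.Projective R P ∧ ∃ f : P →ₗ[R] M, Function.Surjective f ∧
        pdLE R n (LinearMap.ker f)

/-- Injective dimension at most `n`. -/
def idLE (R : Type u) [CommRing R] : ℕ → ∀ (M : Type u) [AddCommGroup M] [Module R M], Prop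
  | 0, M, _, _ => Module.Injective R M
  | n+1, M, _, _ => ∃ (I : Type u) (_ : AddCommGroup I) (_ : Module R I),
      Module.Injective R I ∧ ∃ f : M →ₗ[R] I, Function.Injective f ∧
        idLE R n (I ⧸ LinearMap.range f)

/-- Gorenstein local ring: noetherian local with finite self-injective dimension. -/
def IsGorensteinLocalRing (R : Type u) [CommRing R] : Prop :=
  IsNoetherianRing R ∧ IsLocalRing R ∧ ∃ n : ℕ, idLE R n R

/-- The map `M → R^ν` obtained from a free cover `ε : R^ν ↠ M^*` by dualizing and composing
with the biduality map; its cokernel is the pushforward `M₁`. -/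
def pushMap (R M : Type u) [CommRing R] [AddCommGroup M] [Module R M] {ν : ℕ}
    (ε : (Fin ν → R) →ₗ[R] Module.Dual R M) : M →ₗ[R] (Fin ν → R) where
  toFun m := fun i => ε (Pi.single i 1) m
  map_add' x y := by funext i; simp
  map_smul' r x := by funext i; simp

/-- Length of a module, as the Krull dimension of its lattice of submodules. -/
def mlen (R : Type u) [CommRing R] (M : Type u) [AddCommGroup M] [Module R M] :
    WithBot ℕ∞ :=
  Order.krullDim (Submodule R M)

/-- An unramified regular local ring: equicharacteristic (contains a field), or of mixed
characteristic `(0, p)` with `p` not in the square of the maximal ideal. -/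
def IsUnramifiedRegLocal (Q : Type u) [CommRing Q] : Prop :=
  IsRegLocal Q ∧
    ((∃ (K : Type u) (_ : Field K), Nonempty (K →+* Q)) ∨
     (CharZero Q ∧ ∃ p : ℕ, p.Prime ∧ (p : Q) ∈ nonunits Q ∧
        (p : Q) ∉ (Ideal.span (nonunits Q)) ^ 2))

namespace DF

section ExtPart
variable {R : Type u} [CommRing R] (k : Type u) [AddCommGroup k] [Module R k]

/-- `Ext^n_R(k, X)`. -/
abbrev EX (R : Type u) [CommRing R] (k : Type u) [AddCommGroup k] [Module R k]
    (X : Type u) [AddCommGroup X] [Module R X] (n : ℕ) : Type u :=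
  Abelian.Ext (ModuleCat.of R k) (ModuleCat.of R X) n

variable {X Y Z : Type u} [AddCommGroup X] [Module R X] [AddCommGroup Y] [Module R Y]
  [AddCommGroup Z] [Module R Z]

/-- The map induced on `Ext^n(k, -)`. -/
def EXmap (f : X →ₗ[R] Y) (n : ℕ) : EX R k X n →+ EX R k Y n :=
  (Abelian.Ext.mk₀ (ModuleCat.ofHom f)).postcomp _ (add_zero n)

lemma EXmap_comp (f : X →ₗ[R] Y) (g : Y →ₗ[R] Z) (n : ℕ) (x : EX R k X n) :
    EXmap k (g ∘ₗ f) n x = EXmap k g n (EXmap k f n x) := by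
  simp [EXmap, ModuleCat.ofHom_comp, ← Abelian.Ext.mk₀_comp_mk₀]

lemma EXmap_id (n : ℕ) (x : EX R k X n) :
    EXmap k (LinearMap.id : X →ₗ[R] X) n x = x := by
  simp [EXmap]

lemma EXmap_add (f g : X →ₗ[R] Y) (n : ℕ) (x : EX R k X n) :
    EXmap k (f + g) n x = EXmap k f n x + EXmap k g n x := by
  simp [EXmap, ModuleCat.ofHom_add, Abelian.Ext.mk₀_add]

lemma EXmap_zero (n : ℕ) (x : EX R k X n) :
    EXmap k (0 : X →ₗ[R] Y) n x = 0 := by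
  have := EXmap_add k (0 : X →ₗ[R] Y) 0 n x
  simpa using this

lemma EXmap_sum {ι : Type*} (s : Finset ι) (f : ι → (X →ₗ[R] Y)) (n : ℕ) (x : EX R k X n) :
    EXmap k (∑ i ∈ s, f i) n x = ∑ i ∈ s, EXmap k (f i) n x := by
  classical
  induction s using Finset.induction_on with
  | empty => simp [EXmap_zero]
  | insert a s ha ih => simp [Finset.sum_insert ha, EXmap_add, ih]

lemma EXmap_smul_eq_zero (r : R) (hr : ∀ y : k, r • y = 0) (f : X →ₗ[R] Y) (n : ℕ)
    (x : EX R k X n) : EXmap k (r • f) n x = 0 := by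
  have h1 : r • x = 0 := by
    have : (r • Abelian.Ext.mk₀ (𝟙 (ModuleCat.of R k))).comp x (zero_add n) = r • x := by
      rw [Abelian.Ext.smul_comp, Abelian.Ext.mk₀_id_comp]
    rw [← this, ← Abelian.Ext.mk₀_smul]
    have h0 : r • 𝟙 (ModuleCat.of R k) = 0 := by
      ext y
      exact hr y
    rw [h0, Abelian.Ext.mk₀_zero, Abelian.Ext.zero_comp]
  have : ModuleCat.ofHom (r • f) = r • ModuleCat.ofHom f := rfl
  simp only [EXmap, this, Abelian.Ext.mk₀_smul]
  change x.comp _ (add_zero n) = 0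
  rw [Abelian.Ext.comp_smul, ← Abelian.Ext.smul_comp, h1, Abelian.Ext.zero_comp]

lemma EXmap_mem_smul_top (I : Ideal R) (hI : ∀ r ∈ I, ∀ y : k, r • y = 0) (f : X →ₗ[R] Y)
    (hf : f ∈ (I • ⊤ : Submodule R (X →ₗ[R] Y))) (n : ℕ)
    (x : EX R k X n) : EXmap k f n x = 0 := by
  induction hf using Submodule.smul_induction_on' with
  | smul r hr g _ => exact EXmap_smul_eq_zero k r (hI r hr) g n x
  | add g _ h _ hg hh => rw [EXmap_add, hg, hh, add_zero]

/-- short exact sequences of modules -/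
structure SES (f : X →ₗ[R] Y) (g : Y →ₗ[R] Z) : Prop where
  inj : Function.Injective f
  exact : Function.Exact f g
  surj : Function.Surjective g

lemma SES.shortExact {f : X →ₗ[R] Y} {g : Y →ₗ[R] Z} (h : SES f g) :
    (ShortComplex.mk (ModuleCat.ofHom f) (ModuleCat.ofHom g) (by
      ext x; exact h.exact.apply_apply_eq_zero x)).ShortExact := by
  refine ShortComplex.ShortExact.mk' ?_ ?_ ?_
  · rw [ShortComplex.ShortExact.moduleCat_exact_iff_function_exact]; exact h.exact
  · exact (ModuleCat.mono_iff_injective _).2 h.inj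
  · exact (ModuleCat.epi_iff_surjective _).2 h.surj

lemma SES.ext_inj₁ {f : X →ₗ[R] Y} {g : Y →ₗ[R] Z} (h : SES f g) (n : ℕ)
    (hz : ∀ j, j + 1 = n → Subsingleton (EX R k Z j)) : Function.Injective (EXmap k f n) := by
  rw [injective_iff_map_eq_zero]
  intro x hx
  cases n with
  | zero =>
    have := (ModuleCat.mono_iff_injective (ModuleCat.ofHom f)).2 h.inj
    have := Abelian.Ext.postcomp_mk₀_injective_of_mono (ModuleCat.of R k) (ModuleCat.ofHom f)
    exact (injective_iff_map_eq_zero _).1 this x hx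
  | succ n =>
    obtain ⟨y, hy⟩ := Abelian.Ext.covariant_sequence_exact₁ _ h.shortExact x hx rfl
    have := hz n rfl
    rw [← hy, Subsingleton.elim y 0, Abelian.Ext.zero_comp]

lemma SES.ext_inj₂ {f : X →ₗ[R] Y} {g : Y →ₗ[R] Z} (h : SES f g) (n : ℕ)
    (hx : Subsingleton (EX R k X n)) : Function.Injective (EXmap k g n) := by
  rw [injective_iff_map_eq_zero]
  intro x hx
  obtain ⟨y, hy⟩ := Abelian.Ext.covariant_sequence_exact₂ _ h.shortExact x hx
  rw [← hy, Subsingleton.elim y 0, Abelian.Ext.zero_comp]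

lemma SES.ext_van₃ {f : X →ₗ[R] Y} {g : Y →ₗ[R] Z} (h : SES f g) (n : ℕ)
    (hy : Subsingleton (EX R k Y n)) (hx : Subsingleton (EX R k X (n+1))) :
    Subsingleton (EX R k Z n) := by
  refine subsingleton_of_forall_eq 0 fun z => ?_
  obtain ⟨y, hy⟩ := Abelian.Ext.covariant_sequence_exact₃ _ h.shortExact z rfl
    (Subsingleton.elim _ _)
  rw [← hy, Subsingleton.elim y 0, Abelian.Ext.zero_comp]

lemma SES.ext_van₂ {f : X →ₗ[R] Y} {g : Y →ₗ[R] Z} (h : SES f g) (n : ℕ)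
    (hx : Subsingleton (EX R k X n)) (hz : Subsingleton (EX R k Z n)) :
    Subsingleton (EX R k Y n) := (h.ext_inj₂ k n hx).subsingleton

lemma SES.ext_van₁ {f : X →ₗ[R] Y} {g : Y →ₗ[R] Z} (h : SES f g) (n : ℕ)
    (hy : Subsingleton (EX R k Y n)) (hz : ∀ j, j + 1 = n → Subsingleton (EX R k Z j)) :
    Subsingleton (EX R k X n) := (h.ext_inj₁ k n hz).subsingleton

lemma EX_congr (e : X ≃ₗ[R] Y) (n : ℕ) (h : Subsingleton (EX R k Y n)) :
    Subsingleton (EX R k X n) := by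
  refine subsingleton_of_forall_eq 0 fun x => ?_
  rw [← EXmap_id k n x]
  have : (LinearMap.id : X →ₗ[R] X) = e.symm.toLinearMap ∘ₗ e.toLinearMap := by ext; simp
  rw [this, EXmap_comp, Subsingleton.elim (EXmap k e.toLinearMap n x) 0, map_zero]

lemma EX_of_subsingleton [Subsingleton X] (n : ℕ) : Subsingleton (EX R k X n) := by
  refine subsingleton_of_forall_eq 0 fun x => ?_
  rw [← EXmap_id k n x, Subsingleton.elim (LinearMap.id : X →ₗ[R] X) 0, EXmap_zero]

/-- `depth ≥ n`, cohomologically. -/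
def DGE (R : Type u) [CommRing R] (k : Type u) [AddCommGroup k] [Module R k]
    (X : Type u) [AddCommGroup X] [Module R X] (n : ℕ) : Prop :=
  ∀ j < n, Subsingleton (EX R k X j)

/-- `depth = n`, cohomologically. -/
def DEQ (R : Type u) [CommRing R] (k : Type u) [AddCommGroup k] [Module R k]
    (X : Type u) [AddCommGroup X] [Module R X] (n : ℕ) : Prop :=
  DGE R k X n ∧ Nontrivial (EX R k X n)

lemma DEQ_congr (e : X ≃ₗ[R] Y) (n : ℕ) (h : DEQ R k X n) : DEQ R k Y n := by
  refine ⟨fun j hj => EX_congr k e.symm j (h.1 j hj), ?_⟩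
  by_contra hn
  rw [not_nontrivial_iff_subsingleton] at hn
  exact not_subsingleton_iff_nontrivial.2 h.2 (EX_congr k e n hn)

end ExtPart
end DF

namespace DF

section ThmA
variable {R : Type u} [CommRing R] (k : Type u) [AddCommGroup k] [Module R k]
variable {X Y Z : Type u} [AddCommGroup X] [Module R X] [AddCommGroup Y] [Module R Y]
  [AddCommGroup Z] [Module R Z]

lemma EX_zero_of_inj_zero {f : X →ₗ[R] Y} {n : ℕ} (hi : Function.Injective (EXmap k f n))
    (h0 : ∀ x, EXmap k f n x = 0) : Subsingleton (EX R k X n) :=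
  subsingleton_of_forall_eq 0 fun x => hi (by rw [h0, map_zero])

theorem depth_count (C Z W H : ℕ → Type u)
    [∀ i, AddCommGroup (C i)] [∀ i, Module R (C i)]
    [∀ i, AddCommGroup (Z i)] [∀ i, Module R (Z i)]
    [∀ i, AddCommGroup (W i)] [∀ i, Module R (W i)]
    [∀ i, AddCommGroup (H i)] [∀ i, Module R (H i)]
    (ι : ∀ i, Z i →ₗ[R] C i) (π : ∀ i, C i →ₗ[R] W i)
    (j : ∀ i, W (i+1) →ₗ[R] Z i) (q : ∀ i, Z i →ₗ[R] H i)
    (h1 : ∀ i, SES (ι i) (π i)) (h2 : ∀ i, SES (j i) (q i))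
    (hW0 : Subsingleton (W 0))
    (hmin : ∀ i n x, EXmap k (ι i ∘ₗ j i ∘ₗ π (i+1)) n x = 0)
    (d t c p : ℕ) (hC : ∀ i, DGE R k (C i) d) (hCp : Nontrivial (EX R k (C p) d))
    (hCz : ∀ i, p < i → Subsingleton (C i))
    (hH : ∀ i, DGE R k (H i) t) (hHc : Nontrivial (EX R k (H c) t))
    (hHz : ∀ i, c < i → Subsingleton (H i)) : d + c = p + t := by
  have bZ : ∀ i, DGE R k (W i) (min d (t+1)) → DGE R k (Z i) (min d (t+2)) := by
    intro i hi l hl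
    rw [lt_min_iff] at hl
    exact (h1 i).ext_van₁ k l (hC i l hl.1) fun l' hl' => hi l' (by rw [lt_min_iff]; omega)
  have bW : ∀ i, DGE R k (W i) (min d (t+1)) := by
    intro i
    induction i with
    | zero => exact fun l _ => EX_of_subsingleton k l
    | succ i ih =>
      intro l hl
      rw [lt_min_iff] at hl
      exact (h2 i).ext_van₁ k l (bZ i ih l (by rw [lt_min_iff]; omega))
        fun l' hl' => hH i l' (by omega)
  have bZ' := fun i => bZ i (bW i)
  have hpc : c ≤ p := by
    by_contra hcon
    have := hCz c (by omega)
    have := (h1 c).inj.subsingleton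
    have := (h2 c).surj.subsingleton
    exact not_subsingleton_iff_nontrivial.2 hHc (EX_of_subsingleton k t)
  have desc : ∀ m i, i + 1 + m = p → c ≤ i → ∃ e, e + m = d ∧ Nontrivial (EX R k (W (i+1)) e) ∧
      DGE R k (W (i+1)) e ∧ ∀ x : EX R k (W (i+1)) e, EXmap k (ι i ∘ₗ j i) e x = 0 := by
    intro m
    induction m with
    | zero =>
      intro i hi hci
      obtain rfl : i + 1 = p := by omega
      have := hHz (i+1) (by omega)
      have := hCz (i+1+1) (by omega)
      have := (h1 (i+1+1)).surj.subsingleton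
      have hZ : Subsingleton (Z (i+1)) := by
        refine subsingleton_of_forall_eq 0 fun z => ?_
        obtain ⟨w, rfl⟩ := ((h2 (i+1)).exact z).1 (Subsingleton.elim _ _)
        rw [Subsingleton.elim w 0, map_zero]
      have hZE := fun n => EX_of_subsingleton (R := R) (X := Z (i+1)) k n
      refine ⟨d, rfl, ?_, ?_, ?_⟩
      · exact ((h1 (i+1)).ext_inj₂ k d (hZE d)).nontrivial
      · exact fun l hl => (h1 (i+1)).ext_van₃ k l (hC _ l hl) (hZE _)
      · intro x
        have hb : Function.Bijective (π (i+1)) := by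
          refine ⟨?_, (h1 (i+1)).surj⟩
          rw [injective_iff_map_eq_zero]
          intro a ha
          obtain ⟨w, rfl⟩ := ((h1 (i+1)).exact a).1 ha
          rw [Subsingleton.elim w 0, map_zero]
        let e := LinearEquiv.ofBijective _ hb
        have hx : EXmap k (π (i+1)) d (EXmap k e.symm.toLinearMap d x) = x := by
          rw [← EXmap_comp]
          have : π (i+1) ∘ₗ e.symm.toLinearMap = LinearMap.id := by
            ext y; exact e.apply_symm_apply y
          rw [this, EXmap_id]
        rw [← hx, ← EXmap_comp]
        exact hmin i d _
    | succ m ih =>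
      intro i hi hci
      obtain ⟨e, hem, hn, hD, h0⟩ := ih (i+1) (by omega) (by omega)
      have := hHz (i+1) (by omega)
      have hs : SES (ι (i+1) ∘ₗ j (i+1)) (π (i+1)) := by
        refine ⟨(h1 (i+1)).inj.comp (h2 (i+1)).inj, ?_, (h1 (i+1)).surj⟩
        intro y
        rw [(h1 (i+1)).exact y]
        constructor
        · rintro ⟨z, rfl⟩
          obtain ⟨w, rfl⟩ := ((h2 (i+1)).exact z).1 (Subsingleton.elim _ _)
          exact ⟨w, rfl⟩
        · rintro ⟨w, rfl⟩
          exact ⟨_, rfl⟩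
      have he : ∃ e', e' + 1 = e ∧ Nontrivial (EX R k (W (i+1)) e') := by
        by_contra hcon
        push Not at hcon
        exact not_subsingleton_iff_nontrivial.2 hn
          (EX_zero_of_inj_zero k (hs.ext_inj₁ k e fun l hl => by
            simpa [not_nontrivial_iff_subsingleton] using hcon l hl) h0)
      obtain ⟨e', rfl, he'⟩ := he
      refine ⟨e', by omega, he', ?_, ?_⟩
      · exact fun l hl => hs.ext_van₃ k l (hC _ l (by omega)) (hD _ (by omega))
      · intro x
        have := hC i e' (by omega)
        exact Subsingleton.elim _ _
  rcases hpc.eq_or_lt with rfl | hlt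
  · -- `p = c`
    have := hCz (c+1) (by omega)
    have := (h1 (c+1)).surj.subsingleton
    have hq : Function.Injective (q c) := by
      rw [injective_iff_map_eq_zero]
      intro a ha
      obtain ⟨w, rfl⟩ := ((h2 c).exact a).1 ha
      rw [Subsingleton.elim w 0, map_zero]
    let e := LinearEquiv.ofBijective (q c) ⟨hq, (h2 c).surj⟩
    rcases lt_trichotomy d t with h | h | h
    · exfalso
      have hZ : Subsingleton (EX R k (Z c) d) := EX_congr k e d (hH c d h)
      have i1 := (h1 c).ext_inj₂ k d hZ
      refine not_subsingleton_iff_nontrivial.2 hCp ?_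
      cases c with
      | zero =>
        have := EX_of_subsingleton (R := R) (X := W 0) k d
        exact i1.subsingleton
      | succ c =>
        have i2 := (h2 c).ext_inj₁ k d fun l hl => hH c l (by omega)
        have i3 := (h1 c).ext_inj₁ k d fun l hl => bW c l (by rw [lt_min_iff]; omega)
        refine EX_zero_of_inj_zero k (f := ι c ∘ₗ j c ∘ₗ π (c+1)) ?_ (hmin c d)
        intro x y hxy
        simp only [EXmap_comp] at hxy
        exact i1 (i2 (i3 hxy))
    · omega
    · exfalso
      have := bZ' c t (by rw [lt_min_iff]; omega)
      exact not_subsingleton_iff_nontrivial.2 hHc (EX_congr k e.symm t this)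
  · obtain ⟨m, hm⟩ : ∃ m, c + 1 + m = p := ⟨p - (c+1), by omega⟩
    obtain ⟨e, hem, hn, hD, h0⟩ := desc m c hm le_rfl
    rcases lt_trichotomy e (t+1) with h | h | h
    · exfalso
      have i3 := (h1 c).ext_inj₁ k e fun l hl => bW c l (by rw [lt_min_iff]; omega)
      have i2 := (h2 c).ext_inj₁ k e fun l hl => hH c l (by omega)
      refine not_subsingleton_iff_nontrivial.2 hn
        (EX_zero_of_inj_zero k (f := ι c ∘ₗ j c) ?_ h0)
      intro x y hxy
      simp only [EXmap_comp] at hxy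
      exact i2 (i3 hxy)
    · omega
    · exfalso
      exact not_subsingleton_iff_nontrivial.2 hHc
        ((h2 c).ext_van₃ k t (bZ' c t (by rw [lt_min_iff]; omega)) (hD _ h))

end ThmA
end DF

namespace DF

section TorPart
open TensorProduct
variable {R : Type u} [CommRing R]

/-- A class of modules for which tensoring with `N` is well behaved. -/
structure TorClass (R : Type u) [CommRing R] (N : Type u) [AddCommGroup N] [Module R N]
    (TV : ∀ (X : Type u) [AddCommGroup X] [Module R X], Prop) : Prop where
  flat : ∀ (X : Type u) [AddCommGroup X] [Module R X] [Module.Flat R X], TV X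
  ker : ∀ {X Y Z : Type u} [AddCommGroup X] [Module R X] [AddCommGroup Y] [Module R Y]
    [AddCommGroup Z] [Module R Z] {f : X →ₗ[R] Y} {g : Y →ₗ[R] Z}, SES f g → TV Y → TV Z → TV X
  ext : ∀ {X Y Z : Type u} [AddCommGroup X] [Module R X] [AddCommGroup Y] [Module R Y]
    [AddCommGroup Z] [Module R Z] {f : X →ₗ[R] Y} {g : Y →ₗ[R] Z}, SES f g → TV X → TV Z → TV Y
  inj : ∀ {X Y Z : Type u} [AddCommGroup X] [Module R X] [AddCommGroup Y] [Module R Y]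
    [AddCommGroup Z] [Module R Z] {f : X →ₗ[R] Y} {g : Y →ₗ[R] Z}, SES f g → TV Z →
    Function.Injective (f.rTensor N)

section
variable {N : Type u} [AddCommGroup N] [Module R N]
    {TV : ∀ (X : Type u) [AddCommGroup X] [Module R X], Prop} (T : TorClass R N TV)
  {X Y Z : Type u} [AddCommGroup X] [Module R X] [AddCommGroup Y] [Module R Y]
    [AddCommGroup Z] [Module R Z]
include T

lemma TorClass.zero [Subsingleton X] : TV X := by
  have : Module.Flat R X := by
    have : Module.Free R X := Module.Free.of_subsingleton R X
    infer_instance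
  exact T.flat X

lemma TorClass.congr (e : X ≃ₗ[R] Y) (h : TV X) : TV Y := by
  have : SES e.toLinearMap (0 : Y →ₗ[R] PUnit.{u+1}) :=
    ⟨e.injective, fun y => by simpa using ⟨e.symm y, by simp⟩, fun y => ⟨0, rfl⟩⟩
  exact T.ext this h T.zero

lemma TorClass.ses {f : X →ₗ[R] Y} {g : Y →ₗ[R] Z} (h : SES f g) (hz : TV Z) :
    SES (f.rTensor N) (g.rTensor N) :=
  ⟨T.inj h hz, rTensor_exact N h.exact h.surj, LinearMap.rTensor_surjective N h.surj⟩
end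

lemma torClass_flat (N : Type u) [AddCommGroup N] [Module R N] [Module.Flat R N] :
    TorClass R N (fun _ _ _ => True) where
  flat := fun _ _ _ _ => trivial
  ker := fun _ _ _ => trivial
  ext := fun _ _ _ => trivial
  inj := fun h _ => Module.Flat.rTensor_preserves_injective_linearMap _ h.inj

section
variable {X Y Z K P L : Type u} [AddCommGroup X] [Module R X] [AddCommGroup Y] [Module R Y]
    [AddCommGroup Z] [Module R Z] [AddCommGroup K] [Module R K] [AddCommGroup P] [Module R P]
    [AddCommGroup L] [Module R L]

lemma sq_comm (f : X →ₗ[R] Y) (a : K →ₗ[R] P) (x : X ⊗[R] K) :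
    a.lTensor Y (f.rTensor K x) = f.rTensor P (a.lTensor X x) := by
  have : a.lTensor Y ∘ₗ f.rTensor K = f.rTensor P ∘ₗ a.lTensor X := by
    rw [LinearMap.lTensor_comp_rTensor, LinearMap.rTensor_comp_lTensor]
  exact LinearMap.congr_fun this x

lemma lemmaS {f : X →ₗ[R] Y} {g : Y →ₗ[R] Z} (h : SES f g) {a : K →ₗ[R] P} {b : P →ₗ[R] L}
    (h' : SES a b) [Module.Flat R P] (hz : Function.Injective (a.lTensor Z)) :
    Function.Injective (f.rTensor L) := by
  rw [injective_iff_map_eq_zero]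
  intro x hx
  obtain ⟨x', rfl⟩ := LinearMap.lTensor_surjective X h'.surj x
  rw [← sq_comm] at hx
  obtain ⟨w, hw⟩ := (lTensor_exact Y h'.exact h'.surj _).1 hx
  have h1 : g.rTensor K w = 0 := by
    apply hz
    rw [sq_comm, hw, map_zero]
    exact (rTensor_exact P h.exact h.surj).apply_apply_eq_zero _
  obtain ⟨v, rfl⟩ := (rTensor_exact K h.exact h.surj _).1 h1
  rw [sq_comm] at hw
  have := Module.Flat.rTensor_preserves_injective_linearMap (M := P) f h.inj hw
  rw [← this]
  exact (lTensor_exact X h'.exact h'.surj).apply_apply_eq_zero _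
end

section
variable (L P : ℕ → Type u) [∀ i, AddCommGroup (L i)] [∀ i, Module R (L i)]
  [∀ i, AddCommGroup (P i)] [∀ i, Module R (P i)] [∀ i, Module.Flat R (P i)]
  (a : ∀ i, L (i+1) →ₗ[R] P i) (b : ∀ i, P i →ₗ[R] L i)

/-- Tor-vanishing class attached to a flat resolution. -/
def TVres (X : Type u) [AddCommGroup X] [Module R X] : Prop :=
  ∀ i, Function.Injective ((a i).lTensor X)

include b in
lemma torClass_res (h : ∀ i, SES (a i) (b i)) :
    TorClass R (L 0) (fun X _ _ => TVres L P a X) where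
  flat := fun X _ _ _ i => Module.Flat.lTensor_preserves_injective_linearMap _ (h i).inj
  ker := by
    intro X Y Z _ _ _ _ _ _ f g hs hY hZ i
    have h1 := lemmaS hs (h (i+1)) (hZ (i+1))
    have h2 := (hY i).comp h1
    refine Function.Injective.of_comp (f := f.rTensor (P i)) ?_
    convert h2 using 1
    ext x
    exact (sq_comm f (a i) x).symm
  ext := by
    intro X Y Z _ _ _ _ _ _ f g hs hX hZ i
    rw [injective_iff_map_eq_zero]
    intro y hy
    have h1 : g.rTensor _ y = 0 := by
      apply hZ i
      rw [sq_comm, hy, map_zero, map_zero]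
    obtain ⟨x, rfl⟩ := (rTensor_exact _ hs.exact hs.surj _).1 h1
    rw [sq_comm] at hy
    have h2 := Module.Flat.rTensor_preserves_injective_linearMap (M := P i) f hs.inj
      (hy.trans (map_zero _).symm)
    rw [hX i (h2.trans (map_zero _).symm), map_zero]
  inj := fun hs hZ => lemmaS hs (h 0) (hZ 0)

include b in
lemma TVres_of_exact (h : ∀ i, SES (a i) (b i)) (M : Type u) [AddCommGroup M] [Module R M]
    (hM : ∀ i, Function.Exact ((a (i+1) ∘ₗ b (i+2)).lTensor M) ((a i ∘ₗ b (i+1)).lTensor M)) :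
    TVres L P a M := by
  intro i
  rw [injective_iff_map_eq_zero]
  intro z hz
  obtain ⟨w, rfl⟩ := LinearMap.lTensor_surjective M (h (i+1)).surj z
  rw [← LinearMap.comp_apply, ← LinearMap.lTensor_comp] at hz
  obtain ⟨v, rfl⟩ := (hM i w).1 hz
  rw [← LinearMap.comp_apply, ← LinearMap.lTensor_comp, ← LinearMap.comp_assoc,
    (h (i+1)).exact.linearMap_comp_eq_zero]
  simp

lemma TVres_tensor (A : Type u) [AddCommGroup A] [Module R A] [Module.Flat R A]
    (M : Type u) [AddCommGroup M] [Module R M] (hM : TVres L P a M) :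
    TVres L P a (A ⊗[R] M) := by
  intro i
  rw [LinearMap.lTensor_tensor]
  simp only [LinearMap.coe_comp, LinearEquiv.coe_coe, EmbeddingLike.comp_injective,
    EquivLike.injective_comp]
  exact Module.Flat.lTensor_preserves_injective_linearMap _ (hM i)
end

lemma torClass_of_resolution (M N : Type u) [AddCommGroup M] [Module R M]
    [AddCommGroup N] [Module R N] (P : ℕ → Type u) [∀ i, AddCommGroup (P i)]
    [∀ i, Module R (P i)] [∀ i, Module.Flat R (P i)] (d : ∀ i, P (i+1) →ₗ[R] P i)
    (ε : P 0 →ₗ[R] N) (hex : ∀ i, Function.Exact (d (i+1)) (d i))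
    (hex0 : Function.Exact (d 0) ε) (hε : Function.Surjective ε)
    (hM : ∀ i, Function.Exact ((d (i+1)).lTensor M) ((d i).lTensor M)) :
    ∃ TV : ∀ (X : Type u) [AddCommGroup X] [Module R X], Prop, TorClass R N TV ∧
      ∀ (A : Type u) [AddCommGroup A] [Module R A] [Module.Flat R A], TV (A ⊗[R] M) := by
  let L : ℕ → ModuleCat.{u} R := fun n => match n with
    | 0 => ModuleCat.of R N
    | i+1 => ModuleCat.of R (LinearMap.range (d i))
  let a : ∀ i, L (i+1) →ₗ[R] P i := fun i => (LinearMap.range (d i)).subtype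
  let b : ∀ i, P i →ₗ[R] L i := fun n => match n with
    | 0 => ε
    | i+1 => (d i).rangeRestrict
  have hab : ∀ i, SES (a i) (b i) := by
    intro n
    cases n with
    | zero =>
      refine ⟨Subtype.val_injective, fun x => ?_, hε⟩
      rw [show b 0 = ε from rfl, hex0 x]
      exact ⟨fun ⟨y, hy⟩ => ⟨⟨x, y, hy⟩, rfl⟩, fun ⟨y, hy⟩ => hy ▸ y.2⟩
    | succ i =>
      refine ⟨Subtype.val_injective, fun x => ?_, LinearMap.surjective_rangeRestrict (d i)⟩
      have : b (i+1) x = 0 ↔ d i x = 0 :=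
        ⟨fun h => congrArg Subtype.val h, fun h => Subtype.ext h⟩
      rw [this, hex i x]
      exact ⟨fun ⟨y, hy⟩ => ⟨⟨x, y, hy⟩, rfl⟩, fun ⟨y, hy⟩ => hy ▸ y.2⟩
  refine ⟨fun X _ _ => TVres (fun i => L i) (fun i => P i) a X,
    torClass_res (fun i => L i) (fun i => P i) a b hab, fun A _ _ _ => ?_⟩
  have hcomp : ∀ i, a i ∘ₗ b (i+1) = d i := fun i => LinearMap.ext fun x => rfl
  have hM' : ∀ i, Function.Exact ((a (i+1) ∘ₗ b (i+2)).lTensor M)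
      ((a i ∘ₗ b (i+1)).lTensor M) := by
    intro i
    rw [hcomp i, hcomp (i+1)]
    exact hM i
  exact TVres_tensor (fun i => L i) (fun i => P i) a A M
    (TVres_of_exact (fun i => L i) (fun i => P i) a b hab M hM')

/-- existence of the Tor class containing `A ⊗ M`. -/
theorem exists_torClass (M N : Type u) [AddCommGroup M] [Module R M]
    [AddCommGroup N] [Module R N] (hv : ∀ i ≥ 1, Subsingleton (TorM R i M N)) :
    ∃ TV : ∀ (X : Type u) [AddCommGroup X] [Module R X], Prop, TorClass R N TV ∧
      ∀ (A : Type u) [AddCommGroup A] [Module R A] [Module.Flat R A], TV (A ⊗[R] M) := by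
  obtain ⟨P⟩ := (inferInstance : HasProjectiveResolution (ModuleCat.of R N)).out
  let d : ∀ i, P.complex.X (i+1) →ₗ[R] P.complex.X i := fun i => (P.complex.d (i+1) i).hom
  let ε : P.complex.X 0 →ₗ[R] N := (P.π.f 0).hom
  have hex : ∀ i, Function.Exact (d (i+1)) (d i) := by
    intro i
    exact (ShortComplex.ShortExact.moduleCat_exact_iff_function_exact _).1 (P.exact_succ i)
  have hex0 : Function.Exact (d 0) ε :=
    (ShortComplex.ShortExact.moduleCat_exact_iff_function_exact _).1 P.exact₀
  have hε : Function.Surjective ε :=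
    (ModuleCat.epi_iff_surjective (P.π.f 0)).1 inferInstance
  have hflat : ∀ i, Module.Flat R (P.complex.X i) := by
    intro i
    have := (IsProjective.iff_projective (P.complex.X i)).2 (P.projective i)
    infer_instance
  have hM : ∀ i, Function.Exact ((d (i+1)).lTensor M) ((d i).lTensor M) := by
    intro i
    have h1 := hv (i+1) (by omega)
    have h2 : Limits.IsZero (TorModCat R (i+1) M N) :=
      ModuleCat.isZero_iff_subsingleton.2 h1
    have h3 := h2.of_iso (P.isoLeftDerivedObj
      ((MonoidalCategory.tensoringLeft (ModuleCat.{u} R)).obj (ModuleCat.of R M)) (i+1)).symm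
    have h4 := (HomologicalComplex.exactAt_iff_isZero_homology _ _).2 h3
    rw [HomologicalComplex.exactAt_iff' _ (i+2) (i+1) i (by simp) (by simp)] at h4
    exact (ShortComplex.ShortExact.moduleCat_exact_iff_function_exact _).1 h4
  exact torClass_of_resolution M N (fun i => P.complex.X i) d ε hex hex0 hε hM

end TorPart
end DF

namespace DF

section HomologyPart
open scoped Pointwise
variable {Q : Type u} [CommRing Q]

lemma exists_factor {E X Y : Type*} [AddCommGroup E] [Module Q E] [AddCommGroup X] [Module Q X]
    [AddCommGroup Y] [Module Q Y] (φ : E →ₗ[Q] X) (hφ : Function.Surjective φ) (ψ : E →ₗ[Q] Y)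
    (h : ∀ e, φ e = 0 → ψ e = 0) : ∃ β : X →ₗ[Q] Y, ∀ e, β (φ e) = ψ e := by
  refine ⟨(LinearMap.ker φ).liftQ ψ (fun e he => h e he) ∘ₗ
    (φ.quotKerEquivOfSurjective hφ).symm.toLinearMap, fun e => ?_⟩
  have : (φ.quotKerEquivOfSurjective hφ).symm (φ e) = Submodule.Quotient.mk e := by
    rw [LinearEquiv.symm_apply_eq]; rfl
  rw [LinearMap.comp_apply, LinearEquiv.coe_coe, this]
  rfl

section
variable {A B C : Type u} [AddCommGroup A] [Module Q A] [AddCommGroup B] [Module Q B]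
  [AddCommGroup C] [Module Q C] (a : A →ₗ[Q] B) (b : B →ₗ[Q] C)

/-- homology at `B` of `A → B → C`. -/
abbrev Hc : Type u := LinearMap.ker b ⧸ (LinearMap.range a).comap (LinearMap.ker b).subtype

/-- class of a cycle -/
def Hc.mk : LinearMap.ker b →ₗ[Q] Hc a b := Submodule.mkQ _

lemma Hc.mk_surj : Function.Surjective (Hc.mk a b) := Submodule.mkQ_surjective _

lemma Hc.mk_eq_zero (z : LinearMap.ker b) : Hc.mk a b z = 0 ↔ ∃ x, a x = z := by
  simp [Hc.mk]

lemma Hc.subsingleton_iff : Subsingleton (Hc a b) ↔ ∀ z, b z = 0 → ∃ x, a x = z := by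
  constructor
  · intro h z hz
    exact (Hc.mk_eq_zero a b ⟨z, hz⟩).1 (Subsingleton.elim _ _)
  · intro h
    refine subsingleton_of_forall_eq 0 fun y => ?_
    obtain ⟨z, rfl⟩ := Hc.mk_surj a b y
    exact (Hc.mk_eq_zero a b z).2 (h z z.2)
end

/-- closure properties for finite extensions of `M'`. -/
structure FilClosed (Q : Type u) [CommRing Q] (M' : Type u) [AddCommGroup M'] [Module Q M']
    (P : ∀ (X : Type u) [AddCommGroup X] [Module Q X], Prop) : Prop where
  zero : ∀ (X : Type u) [AddCommGroup X] [Module Q X] [Subsingleton X], P X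
  self : ∀ (X : Type u) [AddCommGroup X] [Module Q X], (X ≃ₗ[Q] M') → P X
  ext : ∀ {X Y Z : Type u} [AddCommGroup X] [Module Q X] [AddCommGroup Y] [Module Q Y]
    [AddCommGroup Z] [Module Q Z] {f : X →ₗ[Q] Y} {g : Y →ₗ[Q] Z}, SES f g → P X → P Z → P Y

/-- iterated extensions of `M'`. -/
def Fil (Q : Type u) [CommRing Q] (M' : Type u) [AddCommGroup M'] [Module Q M']
    (X : Type u) [AddCommGroup X] [Module Q X] : Prop :=
  ∀ P : ∀ (X : Type u) [AddCommGroup X] [Module Q X], Prop, FilClosed Q M' P → P X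

lemma Fil.closed (M' : Type u) [AddCommGroup M'] [Module Q M'] :
    FilClosed Q M' (fun X _ _ => Fil Q M' X) where
  zero X _ _ _ P hP := hP.zero X
  self X _ _ e P hP := hP.self X e
  ext h hX hZ P hP := hP.ext h (hX P hP) (hZ P hP)

lemma Fil.congr {M' X Y : Type u} [AddCommGroup M'] [Module Q M'] [AddCommGroup X] [Module Q X]
    [AddCommGroup Y] [Module Q Y] (e : X ≃ₗ[Q] Y) (h : Fil Q M' X) : Fil Q M' Y := by
  have : SES e.toLinearMap (0 : Y →ₗ[Q] PUnit.{u+1}) :=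
    ⟨e.injective, fun y => by simp, fun y => ⟨0, rfl⟩⟩
  exact (Fil.closed M').ext this h ((Fil.closed M').zero _)

/-- complexes of modules -/
structure Cx (Q : Type u) [CommRing Q] where
  C : ℕ → Type u
  [ab : ∀ i, AddCommGroup (C i)]
  [mod : ∀ i, Module Q (C i)]
  d : ∀ i, C (i+1) →ₗ[Q] C i
  dd : ∀ i x, d i (d (i+1) x) = 0

attribute [instance] Cx.ab Cx.mod

/-- homology -/
abbrev Cx.H (K : Cx Q) (j : ℕ) : Type u := Hc (K.d (j+1)) (K.d j)

/-- surjective chain maps -/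
structure Quo (K L : Cx Q) where
  π : ∀ i, K.C i →ₗ[Q] L.C i
  comm : ∀ i x, π i (K.d i x) = L.d i (π (i+1) x)
  surj : ∀ i, Function.Surjective (π i)

section
variable {K L : Cx Q} (p : Quo K L)

lemma Quo.exists_Hmap (j : ℕ) : ∃ α : K.H j →ₗ[Q] L.H j, ∀ (z : LinearMap.ker (K.d j)),
    ∃ h : L.d j (p.π (j+1) z) = 0, α (Hc.mk _ _ z) = Hc.mk _ _ ⟨p.π (j+1) z, h⟩ := by
  have hz : ∀ z : LinearMap.ker (K.d j), L.d j (p.π (j+1) z) = 0 := fun z => by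
    rw [← p.comm, z.2, map_zero]
  obtain ⟨α, hα⟩ := exists_factor (Hc.mk (K.d (j+1)) (K.d j)) (Hc.mk_surj _ _)
    (Hc.mk (L.d (j+1)) (L.d j) ∘ₗ ((p.π (j+1)) ∘ₗ (LinearMap.ker (K.d j)).subtype).codRestrict
      (LinearMap.ker (L.d j)) hz) (by
    intro z hz'
    obtain ⟨x, hx⟩ := (Hc.mk_eq_zero _ _ _).1 hz'
    refine (Hc.mk_eq_zero _ _ _).2 ⟨p.π (j+2) x, ?_⟩
    rw [← p.comm, hx]; rfl)
  exact ⟨α, fun z => ⟨hz z, hα z⟩⟩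

lemma Quo.H_iso (hi : ∀ i, Function.Injective (p.π i)) (j : ℕ) :
    Nonempty (K.H j ≃ₗ[Q] L.H j) := by
  obtain ⟨α, hα⟩ := p.exists_Hmap j
  refine ⟨LinearEquiv.ofBijective α ⟨?_, ?_⟩⟩
  · rw [injective_iff_map_eq_zero]
    intro y hy
    obtain ⟨z, rfl⟩ := Hc.mk_surj _ _ y
    obtain ⟨h, h'⟩ := hα z
    rw [h', Hc.mk_eq_zero] at hy
    obtain ⟨x, hx⟩ := hy
    obtain ⟨x, rfl⟩ := p.surj _ x
    rw [← p.comm] at hx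
    exact (Hc.mk_eq_zero _ _ _).2 ⟨x, hi _ hx⟩
  · intro y
    obtain ⟨⟨z, hz⟩, rfl⟩ := Hc.mk_surj _ _ y
    obtain ⟨z, rfl⟩ := p.surj _ z
    have hz' : K.d j z = 0 := hi _ (by rw [p.comm, map_zero]; exact hz)
    exact ⟨Hc.mk _ _ ⟨z, hz'⟩, (hα ⟨z, hz'⟩).2⟩

theorem Quo.les (f : Q) (hf : ∀ i (x : K.C i), f • x = 0 → x = 0)
    (hker : ∀ i x, p.π i x = 0 ↔ ∃ y, f • y = x)
    (hkill : ∀ j z, K.d j z = 0 → ∃ x, K.d (j+1) x = f • z) (j : ℕ) :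
    ∃ (α : K.H (j+1) →ₗ[Q] L.H (j+1)) (β : L.H (j+1) →ₗ[Q] K.H j), SES α β := by
  have hfi : ∀ i (x y : K.C i), f • x = f • y → x = y := fun i x y h =>
    sub_eq_zero.1 (hf i _ (by rw [smul_sub, h, sub_self]))
  obtain ⟨α, hα⟩ := p.exists_Hmap (j+1)
  let E := LinearMap.ker ((K.d (j+1)) ∘ₗ LinearMap.fst Q (K.C (j+2)) (K.C (j+1)) -
    f • LinearMap.snd Q (K.C (j+2)) (K.C (j+1)))
  have hE : ∀ e : E, K.d (j+1) e.1.1 = f • e.1.2 := fun e => by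
    have : K.d (j+1) e.1.1 - f • e.1.2 = 0 := e.2
    exact sub_eq_zero.1 this
  have hE' : ∀ z y, K.d (j+1) z = f • y → (z, y) ∈ E := fun z y h => by
    exact (sub_eq_zero.2 h : K.d (j+1) z - f • y = 0)
  have h1 : ∀ e : E, L.d (j+1) (p.π (j+2) e.1.1) = 0 := fun e => by
    rw [← p.comm, hE, hker]; exact ⟨_, rfl⟩
  have h2 : ∀ e : E, K.d j e.1.2 = 0 := fun e => hf _ _ (by
    rw [← map_smul, ← hE, K.dd])
  let φ : E →ₗ[Q] L.H (j+1) := Hc.mk _ _ ∘ₗ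
    ((p.π (j+2)) ∘ₗ LinearMap.fst Q _ _ ∘ₗ E.subtype).codRestrict (LinearMap.ker (L.d (j+1))) h1
  let ψ : E →ₗ[Q] K.H j := Hc.mk _ _ ∘ₗ
    (LinearMap.snd Q _ _ ∘ₗ E.subtype).codRestrict (LinearMap.ker (K.d j)) h2
  have hφ0 : ∀ e, φ e = 0 ↔ ∃ x, L.d (j+2) x = p.π (j+2) e.1.1 := fun e => Hc.mk_eq_zero _ _ _
  have hψ0 : ∀ e, ψ e = 0 ↔ ∃ x, K.d (j+1) x = e.1.2 := fun e => Hc.mk_eq_zero _ _ _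
  have hφs : Function.Surjective φ := by
    intro y
    obtain ⟨⟨z, hz⟩, rfl⟩ := Hc.mk_surj _ _ y
    obtain ⟨z, rfl⟩ := p.surj _ z
    have : p.π (j+1) (K.d (j+1) z) = 0 := by rw [p.comm]; exact hz
    obtain ⟨y, hy⟩ := (hker _ _).1 this
    exact ⟨⟨(z, y), hE' _ _ hy.symm⟩, rfl⟩
  obtain ⟨β, hβ⟩ := exists_factor φ hφs ψ (by
    intro e he
    obtain ⟨w, hw⟩ := (hφ0 e).1 he
    obtain ⟨w, rfl⟩ := p.surj _ w
    rw [← p.comm] at hw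
    have : p.π (j+2) (e.1.1 - K.d (j+2) w) = 0 := by rw [map_sub, hw, sub_self]
    obtain ⟨v, hv⟩ := (hker _ _).1 this
    refine (hψ0 e).2 ⟨v, hfi _ _ _ ?_⟩
    rw [← map_smul, hv, map_sub, K.dd, sub_zero, hE])
  refine ⟨α, β, ?_, ?_, ?_⟩
  · rw [injective_iff_map_eq_zero]
    intro y hy
    obtain ⟨z, rfl⟩ := Hc.mk_surj _ _ y
    obtain ⟨h, h'⟩ := hα z
    rw [h', Hc.mk_eq_zero] at hy
    obtain ⟨w, hw⟩ := hy
    obtain ⟨w, rfl⟩ := p.surj _ w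
    rw [← p.comm] at hw
    have : p.π (j+2) (z.1 - K.d (j+2) w) = 0 := by
      rw [map_sub, hw, sub_self]
    obtain ⟨v, hv⟩ := (hker _ _).1 this
    have hdv : K.d (j+1) v = 0 := hf _ _ (by
      rw [← map_smul, hv, map_sub, K.dd, sub_zero]; exact z.2)
    obtain ⟨x, hx⟩ := hkill _ _ hdv
    refine (Hc.mk_eq_zero _ _ _).2 ⟨w + x, ?_⟩
    rw [map_add, hx, hv]; abel
  · intro y
    constructor
    · intro hy
      obtain ⟨e, rfl⟩ := hφs y
      rw [hβ, hψ0] at hy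
      obtain ⟨v, hv⟩ := hy
      have hz : K.d (j+1) (e.1.1 - f • v) = 0 := by
        rw [map_sub, map_smul, hv, hE, sub_self]
      refine ⟨Hc.mk _ _ ⟨_, hz⟩, ?_⟩
      obtain ⟨h, h'⟩ := hα ⟨_, hz⟩
      rw [h']
      refine congrArg _ (Subtype.ext ?_)
      change p.π (j+2) (e.1.1 - f • v) = p.π (j+2) e.1.1
      rw [map_sub, (hker _ (f • v)).2 ⟨_, rfl⟩, sub_zero]
    · rintro ⟨x, rfl⟩
      obtain ⟨z, rfl⟩ := Hc.mk_surj _ _ x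
      obtain ⟨h, h'⟩ := hα z
      have : α (Hc.mk _ _ z) = φ ⟨(z.1, 0), hE' _ _ (by rw [smul_zero]; exact z.2)⟩ := h'
      rw [this, hβ, hψ0]
      exact ⟨0, map_zero _⟩
  · intro y
    obtain ⟨⟨y, hy⟩, rfl⟩ := Hc.mk_surj _ _ y
    obtain ⟨z, hz⟩ := hkill _ _ hy
    exact ⟨φ ⟨(z, y), hE' _ _ hz⟩, hβ _⟩

lemma Quo.van (f : Q) (hf : ∀ i (x : K.C i), f • x = 0 → x = 0)
    (hker : ∀ i x, p.π i x = 0 ↔ ∃ y, f • y = x) (j : ℕ)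
    (h0 : Subsingleton (K.H j)) (h1 : Subsingleton (K.H (j+1))) : Subsingleton (L.H (j+1)) := by
  rw [Hc.subsingleton_iff] at *
  intro z hz
  obtain ⟨z, rfl⟩ := p.surj _ z
  have : p.π (j+1) (K.d (j+1) z) = 0 := by rw [p.comm]; exact hz
  obtain ⟨y, hy⟩ := (hker _ _).1 this
  obtain ⟨v, hv⟩ := h0 y (hf _ _ (by rw [← map_smul, hy, K.dd]))
  obtain ⟨w, hw⟩ := h1 (z - f • v) (by rw [map_sub, map_smul, hv, hy, sub_self])
  refine ⟨p.π _ w, ?_⟩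
  rw [← p.comm, hw, map_sub, (hker _ (f • v)).2 ⟨_, rfl⟩, sub_zero]

/-- `f` is null-homotopic on `K`. -/
def NullH (f : Q) (K : Cx Q) : Prop :=
  ∃ s : ∀ i, K.C i →ₗ[Q] K.C (i+1), ∀ i x, K.d (i+1) (s (i+1) x) + s i (K.d i x) = f • x

lemma NullH.kill {f : Q} (h : NullH f K) (j : ℕ) (z) (hz : K.d j z = 0) :
    ∃ x, K.d (j+1) x = f • z := by
  obtain ⟨s, hs⟩ := h
  exact ⟨s (j+1) z, by rw [← hs, hz, map_zero, add_zero]⟩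

include p in
lemma NullH.desc {g : Q} (h : NullH g K) (f : Q)
    (hker : ∀ i x, p.π i x = 0 ↔ ∃ y, f • y = x) : NullH g L := by
  obtain ⟨s, hs⟩ := h
  have : ∀ i, ∃ t : L.C i →ₗ[Q] L.C (i+1), ∀ x, t (p.π i x) = (p.π (i+1) ∘ₗ s i) x := fun i =>
    exists_factor _ (p.surj i) _ (by
      intro e he
      obtain ⟨y, rfl⟩ := (hker _ _).1 he
      exact (hker _ _).2 ⟨s i y, by rw [map_smul]⟩)
  choose t ht using this
  refine ⟨t, fun i x => ?_⟩
  obtain ⟨x, rfl⟩ := p.surj _ x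
  rw [ht, ← p.comm, ht, ← map_smul, ← hs, map_add]
  simp [p.comm]

/-- the quotient of a complex by `f` -/
def Cx.mod_f (K : Cx Q) (f : Q) : Cx Q where
  C i := QuotSMulTop f (K.C i)
  d i := QuotSMulTop.map f (K.d i)
  dd i x := by
    obtain ⟨x, rfl⟩ := Submodule.Quotient.mk_surjective _ x
    simp only [QuotSMulTop.map_apply_mk, K.dd]
    rfl

/-- projection -/
def Cx.quo_f (K : Cx Q) (f : Q) : Quo K (K.mod_f f) where
  π i := Submodule.mkQ _
  comm i x := rfl
  surj i := Submodule.mkQ_surjective _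

lemma Cx.quo_f_ker (K : Cx Q) (f : Q) (i) (x) : (K.quo_f f).π i x = 0 ↔ ∃ y, f • y = x := by
  have : (K.quo_f f).π i x = 0 ↔ x ∈ (f • ⊤ : Submodule Q (K.C i)) :=
    Submodule.Quotient.mk_eq_zero _
  rw [this, Submodule.mem_smul_pointwise_iff_exists]
  simp

theorem reg_induct (Inv : ℕ → Cx Q → Prop) (S : List Q)
    (hiso : ∀ c (K L : Cx Q) (p : Quo K L), (∀ i x, p.π i x = 0 → x = 0) → Inv c K → Inv c L)
    (step : ∀ c (K L : Cx Q) (p : Quo K L), ∀ f ∈ S, (∀ i (x : K.C i), f • x = 0 → x = 0) →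
      (∀ i x, p.π i x = 0 ↔ ∃ y, f • y = x) → Inv c K → Inv (c+1) L)
    (rs : List Q) (hrs : ∀ f ∈ rs, f ∈ S) (c : ℕ) (K L : Cx Q) (p : Quo K L)
    (hreg : ∀ i, IsWeaklyRegular (K.C i) rs)
    (hker : ∀ i, LinearMap.ker (p.π i) = Ideal.ofList rs • ⊤) (h : Inv c K) :
    Inv (c + rs.length) L := by
  induction rs generalizing c K with
  | nil =>
    refine hiso c K L p (fun i x hx => ?_) h
    have : x ∈ LinearMap.ker (p.π i) := hx
    simpa [hker i] using this
  | cons f rs ih =>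
    have hreg' := fun i => (isWeaklyRegular_cons_iff (K.C i) f rs).1 (hreg i)
    have h1 := step c K (K.mod_f f) (K.quo_f f) f (hrs f (by simp))
      (fun i x hx => (hreg' i).1 (by simpa using hx)) (K.quo_f_ker f) h
    have hle : ∀ i, (f • ⊤ : Submodule Q (K.C i)) ≤ LinearMap.ker (p.π i) := fun i => by
      rw [hker i, Ideal.ofList_cons_smul]; exact le_sup_left
    let p' : Quo (K.mod_f f) L :=
      { π := fun i => Submodule.liftQ _ (p.π i) (hle i)
        comm := by
          intro i x
          obtain ⟨x, rfl⟩ := Submodule.Quotient.mk_surjective _ x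
          exact p.comm i x
        surj := by
          intro i y
          obtain ⟨x, rfl⟩ := p.surj i y
          exact ⟨Submodule.Quotient.mk x, rfl⟩ }
    have := ih (fun g hg => hrs g (by simp [hg])) (c+1) (K.mod_f f) p' (fun i => (hreg' i).2) (by
      intro i
      have e1 : LinearMap.ker (p'.π i) =
          Submodule.map (f • ⊤ : Submodule Q (K.C i)).mkQ (LinearMap.ker (p.π i)) :=
        Submodule.ker_liftQ _ _ _
      rw [e1, hker i, Ideal.ofList_cons_smul, Submodule.map_sup, Submodule.map_smul'',
        Submodule.mkQ_map_self, bot_sup_eq, Submodule.map_top, Submodule.range_mkQ]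
      rfl) h1
    rwa [List.length_cons, add_comm rs.length 1, ← add_assoc]

/-- invariant used for computing homology -/
structure Inv1 (M' : Type u) [AddCommGroup M'] [Module Q M'] (S : List Q) (c : ℕ) (K : Cx Q) :
    Prop where
  fil : ∀ j, Fil Q M' (K.H j)
  z1 : Subsingleton (K.C 1)
  top : Nonempty (K.H c ≃ₗ[Q] M')
  van : ∀ j, c < j → Subsingleton (K.H j)
  null : ∀ g ∈ S, NullH g K

theorem inv1_of_quo (M' : Type u) [AddCommGroup M'] [Module Q M'] (rs : List Q) (c : ℕ)
    (K L : Cx Q) (p : Quo K L) (hreg : ∀ i, IsWeaklyRegular (K.C i) rs)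
    (hker : ∀ i, LinearMap.ker (p.π i) = Ideal.ofList rs • ⊤) (h : Inv1 M' rs c K) :
    Inv1 M' rs (c + rs.length) L := by
  refine reg_induct (Inv1 M' rs) rs ?_ ?_ rs (fun _ h => h) c K L p hreg hker h
  · intro c K L p hp h
    have e := p.H_iso (fun i => (injective_iff_map_eq_zero _).2 (hp i))
    refine ⟨fun j => (h.fil j).congr (e j).some, ?_, ?_, ?_, ?_⟩
    · have := h.z1
      exact (p.surj 1).subsingleton
    · obtain ⟨e'⟩ := h.top
      exact ⟨(e c).some.symm.trans e'⟩
    · intro j hj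
      have := h.van j hj
      exact (e j).some.symm.injective.subsingleton
    · intro g hg
      exact (h.null g hg).desc p 0 (fun i x => ⟨fun h => ⟨0, by rw [hp i x h, smul_zero]⟩, by
        rintro ⟨y, rfl⟩; simp⟩)
  · intro c K L p f hfS hf hker h
    have les := p.les f hf hker (h.null f hfS).kill
    have z1 : Subsingleton (L.C 1) := by
      have := h.z1
      exact (p.surj 1).subsingleton
    refine ⟨fun j => ?_, z1, ?_, ?_, fun g hg => (h.null g hg).desc p f hker⟩
    · cases j with
      | zero =>
        have : Subsingleton (L.H 0) := (Hc.mk_surj _ _).subsingleton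
        exact (Fil.closed M').zero _
      | succ j =>
        obtain ⟨α, β, hs⟩ := les j
        exact (Fil.closed M').ext hs (h.fil _) (h.fil _)
    · obtain ⟨α, β, hs⟩ := les c
      obtain ⟨e⟩ := h.top
      have := h.van (c+1) (by omega)
      have hb : Function.Bijective β := ⟨by
        rw [injective_iff_map_eq_zero]
        intro y hy
        obtain ⟨x, rfl⟩ := (hs.exact y).1 hy
        rw [Subsingleton.elim x 0, map_zero], hs.surj⟩
      exact ⟨(LinearEquiv.ofBijective β hb).trans e⟩
    · intro j hj
      obtain _ | j := j
      · omega
      · exact p.van f hf hker j (h.van _ (by omega)) (h.van _ (by omega))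

theorem van_of_quo (rs : List Q) (c : ℕ)
    (K L : Cx Q) (p : Quo K L) (hreg : ∀ i, IsWeaklyRegular (K.C i) rs)
    (hker : ∀ i, LinearMap.ker (p.π i) = Ideal.ofList rs • ⊤)
    (h : ∀ j, c < j → Subsingleton (K.H j)) :
    ∀ j, c + rs.length < j → Subsingleton (L.H j) := by
  refine reg_induct (fun c K => ∀ j, c < j → Subsingleton (K.H j)) rs ?_ ?_ rs (fun _ h => h) c
    K L p hreg hker h
  · intro c K L p hp h j hj
    obtain ⟨e⟩ := p.H_iso (fun i => (injective_iff_map_eq_zero _).2 (hp i)) j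
    have := h j hj
    exact e.symm.injective.subsingleton
  · intro c K L p f hfS hf hker h j hj
    obtain _ | j := j
    · omega
    · exact p.van f hf hker j (h _ (by omega)) (h _ (by omega))
end

end HomologyPart
end DF

namespace DF

section ResPart
open TensorProduct
variable {Q : Type u} [CommRing Q]

lemma mem_pi_smul_top (I : Ideal Q) (n : ℕ) (x : Fin n → Q) :
    x ∈ (I • ⊤ : Submodule Q (Fin n → Q)) ↔ ∀ l, x l ∈ I := by
  constructor
  · intro hx l
    induction hx using Submodule.smul_induction_on' with
    | smul r hr y _ => exact I.mul_mem_right _ hr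
    | add y _ z _ hy hz => exact I.add_mem hy hz
  · intro h
    have : x = ∑ l, x l • (Pi.single l (1 : Q) : Fin n → Q) := by
      simpa using (pi_eq_sum_univ' x)
    rw [this]
    exact Submodule.sum_mem _ fun l _ => Submodule.smul_mem_smul (h l) trivial

lemma min_cover [IsLocalRing Q] (X : Type u) [AddCommGroup X] [Module Q X] [Module.Finite Q X] :
    ∃ (n : ℕ) (φ : (Fin n → Q) →ₗ[Q] X), Function.Surjective φ ∧
      ∀ v, φ v = 0 → ∀ l, v l ∈ IsLocalRing.maximalIdeal Q := by
  let k := IsLocalRing.ResidueField Q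
  let w := Module.finBasis k (k ⊗[Q] X)
  obtain ⟨v, eq⟩ := (TensorProduct.mk_surjective Q X k Ideal.Quotient.mk_surjective).comp_left w
  refine ⟨_, Fintype.linearCombination Q v, ?_, ?_⟩
  · rw [← LinearMap.range_eq_top, Fintype.range_linearCombination]
    exact IsLocalRing.span_eq_top_of_tmul_eq_basis _ w (congr_fun eq)
  · intro y hy l
    have h1 : (1 : k) ⊗ₜ[Q] (∑ i, y i • v i) = 0 := by
      have : ∑ i, y i • v i = 0 := hy
      rw [this, TensorProduct.tmul_zero]
    have h2 : ∑ i, (algebraMap Q k (y i)) • w i = 0 := by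
      rw [← h1, TensorProduct.tmul_sum]
      refine Finset.sum_congr rfl fun i _ => ?_
      rw [← congr_fun eq i, algebraMap_smul, TensorProduct.tmul_smul]
      rfl
    have := Fintype.linearIndependent_iff.1 w.linearIndependent _ h2 l
    exact (IsLocalRing.residue_eq_zero_iff _).1 this

/-- complexes of free modules -/
def frCx (b : ℕ → ℕ) (D : ∀ i, (Fin (b (i+1)) → Q) →ₗ[Q] (Fin (b i) → Q))
    (dd : ∀ i x, D i (D (i+1) x) = 0) : Cx Q where
  C i := Fin (b i) → Q
  d := D
  dd := dd

lemma exists_min_res [IsLocalRing Q] [IsNoetherianRing Q] (M' : Type u) [AddCommGroup M']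
    [Module Q M'] [Module.Finite Q M'] :
    ∃ (b : ℕ → ℕ) (D : ∀ i, (Fin (b (i+1)) → Q) →ₗ[Q] (Fin (b i) → Q))
      (dd : ∀ i x, D i (D (i+1) x) = 0), b 1 = 0 ∧ b 0 = 0 ∧
      (∀ i x l, D i x l ∈ IsLocalRing.maximalIdeal Q) ∧
      Nonempty ((frCx b D dd).H 1 ≃ₗ[Q] M') ∧ ∀ j, 1 < j → Subsingleton ((frCx b D dd).H j) := by
  have hc : ∀ st : (Σ b : ℕ, Submodule Q (Fin b → Q)), ∃ (n : ℕ)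
      (φ : (Fin n → Q) →ₗ[Q] (Fin st.1 → Q)), LinearMap.range φ = st.2 ∧
      ∀ v, φ v = 0 → ∀ l, v l ∈ IsLocalRing.maximalIdeal Q := by
    rintro ⟨b, K⟩
    obtain ⟨n, φ, hφ, hm⟩ := min_cover (Q := Q) K
    refine ⟨n, K.subtype ∘ₗ φ, ?_, fun v hv => hm v (Subtype.ext hv)⟩
    rw [LinearMap.range_comp, LinearMap.range_eq_top.2 hφ, Submodule.map_top,
      Submodule.range_subtype]
  choose nb nφ hr hm using hc
  obtain ⟨b0, ε, hε, hεm⟩ := min_cover (Q := Q) M'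
  let sq : ℕ → (Σ b : ℕ, Submodule Q (Fin b → Q)) := fun n =>
    Nat.rec ⟨b0, LinearMap.ker ε⟩ (fun _ st => ⟨nb st, LinearMap.ker (nφ st)⟩) n
  have hsm : ∀ n, ∀ v ∈ (sq n).2, ∀ l, v l ∈ IsLocalRing.maximalIdeal Q := by
    intro n
    cases n with
    | zero => exact hεm
    | succ n => exact hm (sq n)
  let b : ℕ → ℕ := fun n => match n with
    | 0 => 0
    | 1 => 0
    | n+2 => (sq n).1
  let D : ∀ i, (Fin (b (i+1)) → Q) →ₗ[Q] (Fin (b i) → Q) := fun n => match n with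
    | 0 => 0
    | 1 => 0
    | n+2 => nφ (sq n)
  have hex : ∀ n v, nφ (sq n) v = 0 ↔ ∃ x, nφ (sq (n+1)) x = v := fun n v => by
    have : v ∈ LinearMap.range (nφ (sq (n+1))) ↔ v ∈ (sq (n+1)).2 := by rw [hr (sq (n+1))]
    exact this.symm
  have dd : ∀ i x, D i (D (i+1) x) = 0 := by
    intro i x
    rcases i with _ | _ | n
    · rfl
    · rfl
    · exact (hex n _).2 ⟨x, rfl⟩
  refine ⟨b, D, dd, rfl, rfl, ?_, ?_, ?_⟩
  · intro i x l
    rcases i with _ | _ | n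
    · exact zero_mem _
    · exact zero_mem _
    · refine hsm n _ ?_ l
      have : nφ (sq n) x ∈ LinearMap.range (nφ (sq n)) := ⟨x, rfl⟩
      rwa [hr] at this
  · have hex0 : ∀ v, ε v = 0 ↔ ∃ x, nφ (sq 0) x = v := fun v => by
      have : v ∈ LinearMap.range (nφ (sq 0)) ↔ v ∈ (sq 0).2 := by rw [hr (sq 0)]
      exact this.symm
    let ψ : LinearMap.ker ((frCx b D dd).d 1) →ₗ[Q] M' :=
      (show (Fin (b 2) → Q) →ₗ[Q] M' from ε) ∘ₗ (LinearMap.ker (D 1)).subtype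
    obtain ⟨β, hβ⟩ := exists_factor (Hc.mk ((frCx b D dd).d 2) ((frCx b D dd).d 1))
      (Hc.mk_surj _ _) ψ (fun e he => (hex0 _).2 ((Hc.mk_eq_zero _ _ _).1 he))
    refine ⟨LinearEquiv.ofBijective β ⟨?_, ?_⟩⟩
    · rw [injective_iff_map_eq_zero]
      intro y hy
      obtain ⟨z, rfl⟩ := Hc.mk_surj _ _ y
      rw [hβ] at hy
      exact (Hc.mk_eq_zero _ _ _).2 ((hex0 _).1 hy)
    · intro y
      obtain ⟨x, rfl⟩ := hε y
      exact ⟨Hc.mk _ _ ⟨x, rfl⟩, hβ _⟩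
  · intro j hj
    rw [Hc.subsingleton_iff]
    rcases j with _ | _ | n
    · omega
    · omega
    · exact fun z hz => (hex n z).1 hz

lemma nullH_of_kill (K : Cx Q) [∀ i, Module.Projective Q (K.C i)] (h1 : Subsingleton (K.C 1))
    (f : Q) (hk : ∀ x : K.H 1, f • x = 0) (hv : ∀ j, 1 < j → Subsingleton (K.H j)) :
    NullH f K := by
  let Good : ∀ i, (K.C i →ₗ[Q] K.C (i+1)) → Prop := fun i s =>
    ∀ x, ∃ w, K.d (i+1) w = f • x - s (K.d i x)
  have step : ∀ i (s : {s // Good i s}), ∃ s' : {s // Good (i+1) s},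
      ∀ x, K.d (i+1) (s'.1 x) + s.1 (K.d i x) = f • x := by
    rintro i ⟨s, hs⟩
    let g : K.C (i+1) →ₗ[Q] K.C (i+1) := f • LinearMap.id - s ∘ₗ K.d i
    have hg : ∀ x, g x ∈ LinearMap.range (K.d (i+1)) := fun x => hs x
    obtain ⟨s', hs'⟩ := Module.projective_lifting_property (K.d (i+1)).rangeRestrict
      (g.codRestrict _ hg) (LinearMap.surjective_rangeRestrict _)
    have e : ∀ x, K.d (i+1) (s' x) = f • x - s (K.d i x) := fun x =>
      congrArg Subtype.val (LinearMap.congr_fun hs' x)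
    refine ⟨⟨s', fun x => ?_⟩, fun x => by rw [e]; abel⟩
    obtain _ | i := i
    · have e0 : K.d 1 x = 0 := Subsingleton.elim _ _
      have := hk (Hc.mk _ _ ⟨x, e0⟩)
      rw [← map_smul, Hc.mk_eq_zero] at this
      obtain ⟨w, hw⟩ := this
      exact ⟨w, by rw [hw, e0, map_zero, sub_zero]; rfl⟩
    · have := hv (i+2) (by omega)
      rw [Hc.subsingleton_iff] at this
      refine this _ ?_
      rw [map_sub, e, map_smul, K.dd, map_zero, sub_zero, sub_self]
  choose nx hnx using step
  let g : ∀ i, {s // Good i s} := fun i =>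
    Nat.rec ⟨0, fun x => ⟨0, Subsingleton.elim _ _⟩⟩ (fun i s => nx i s) i
  exact ⟨fun i => (g i).1, fun i x => hnx i (g i) x⟩

lemma isWeaklyRegular_pi (rs : List Q) (h : IsWeaklyRegular Q rs) (n : ℕ) :
    IsWeaklyRegular (Fin n → Q) rs := by
  have := h.isWeaklyRegular_rTensor (M₂ := Fin n → Q)
  exact ((TensorProduct.lid Q (Fin n → Q)).isWeaklyRegular_congr rs).1 this

/-- base change of free complexes to a quotient -/
lemma pi_ker {B : Type u} [AddCommGroup B] [Module Q B] (f : Q →ₗ[Q] B) (n : ℕ) :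
    LinearMap.ker (f.compLeft (Fin n)) = LinearMap.ker f • ⊤ := by
  ext x
  change _ ↔ x ∈ ((LinearMap.ker f : Ideal Q) • ⊤ : Submodule Q (Fin n → Q))
  rw [mem_pi_smul_top]
  simp only [LinearMap.mem_ker]
  exact funext_iff

lemma finite_length [IsLocalRing Q] (rs : List Q) (hrs : IsWeaklyRegular Q rs)
    (hm : Ideal.ofList rs = IsLocalRing.maximalIdeal Q)
    (b : ℕ → ℕ) (D : ∀ i, (Fin (b (i+1)) → Q) →ₗ[Q] (Fin (b i) → Q))
    (dd : ∀ i x, D i (D (i+1) x) = 0)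
    (hmin : ∀ i x l, D i x l ∈ IsLocalRing.maximalIdeal Q)
    (hv : ∀ j, 1 < j → Subsingleton ((frCx b D dd).H j)) : ∃ n, ∀ i, n < i → b i = 0 := by
  let m := IsLocalRing.maximalIdeal Q
  let L : Cx Q := { C := fun i => Fin (b i) → Q ⧸ m, d := fun i => 0, dd := fun i x => rfl }
  let p : Quo (frCx b D dd) L :=
    { π := fun i => (Submodule.mkQ m).compLeft (Fin (b i))
      comm := fun i x => funext fun l => (Submodule.Quotient.mk_eq_zero _).2 (hmin i x l)
      surj := fun i => (Submodule.mkQ_surjective m).comp_left }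
  have := van_of_quo rs 1 (frCx b D dd) L p (fun i => isWeaklyRegular_pi rs hrs (b i))
    (fun i => by rw [hm]; exact (pi_ker (Submodule.mkQ m) (b i)).trans (by
      rw [Submodule.ker_mkQ]; rfl)) hv
  refine ⟨1 + rs.length + 1, fun i hi => ?_⟩
  obtain _ | i := i
  · omega
  have h := this i (by omega)
  rw [Hc.subsingleton_iff] at h
  have hs : ∀ z : Fin (b (i+1)) → Q ⧸ m, z = 0 := fun z => by
    obtain ⟨x, hx⟩ := h z rfl
    exact hx.symm
  by_contra hb
  have hnt : Nontrivial (Q ⧸ m) := Ideal.Quotient.nontrivial_iff.2 (Ideal.IsPrime.ne_top inferInstance)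
  have := congrFun (hs fun _ => 1) ⟨0, by omega⟩
  exact one_ne_zero this

end ResPart
end DF

namespace DF

section QtoA
variable {Q A : Type u} [CommRing Q] [CommRing A] [Algebra Q A]

lemma exists_modA (hs : Function.Surjective (algebraMap Q A)) (X : Type u) [AddCommGroup X]
    [Module Q X] (hk : ∀ q : Q, algebraMap Q A q = 0 → ∀ x : X, q • x = 0) :
    ∃ _ : Module A X, IsScalarTower Q A X := by
  let sm : SMul A X := ⟨fun a x => Function.surjInv hs a • x⟩
  have key : ∀ (q : Q) (x : X), algebraMap Q A q • x = q • x := by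
    intro q x
    change Function.surjInv hs (algebraMap Q A q) • x = q • x
    rw [← sub_eq_zero, ← sub_smul]
    apply hk
    rw [map_sub, Function.surjInv_eq hs, sub_self]
  let md : Module A X := Function.Surjective.moduleLeft (algebraMap Q A) hs key
  exact ⟨md, IsScalarTower.of_algebraMap_smul key⟩

lemma kill_of_tower (X : Type u) [AddCommGroup X] [Module Q X] [Module A X] [IsScalarTower Q A X]
    (q : Q) (hq : algebraMap Q A q = 0) (x : X) : q • x = 0 := by
  rw [← algebraMap_smul A q x, hq, zero_smul]

lemma Fil.toA (hs : Function.Surjective (algebraMap Q A)) (M' : Type u) [AddCommGroup M']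
    [Module Q M'] [Module A M'] [IsScalarTower Q A M'] (X : Type u) [AddCommGroup X]
    [Module Q X] [Module A X] [IsScalarTower Q A X] (h : Fil Q M' X) : Fil A M' X := by
  refine h (fun X _ _ => ∀ (_ : Module A X) (_ : IsScalarTower Q A X), Fil A M' X)
    ⟨?_, ?_, ?_⟩ _ inferInstance
  · intro X _ _ _ _ _
    exact (Fil.closed M').zero X
  · intro X _ _ e _ _
    exact (Fil.closed M').self X (e.extendScalarsOfSurjective hs)
  · intro X Y Z _ _ _ _ _ _ f g hfg hX hZ _ _
    obtain ⟨_, _⟩ := exists_modA hs X (fun q hq x => hfg.inj (by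
      rw [map_smul, kill_of_tower Y q hq, map_zero]))
    obtain ⟨_, _⟩ := exists_modA hs Z (fun q hq z => by
      obtain ⟨y, rfl⟩ := hfg.surj z
      rw [← map_smul, kill_of_tower Y q hq, map_zero])
    exact (Fil.closed M').ext (f := f.extendScalarsOfSurjective hs)
      (g := g.extendScalarsOfSurjective hs) ⟨hfg.inj, hfg.exact, hfg.surj⟩
      (hX _ inferInstance) (hZ _ inferInstance)

/-- complexes of free `A`-modules -/
structure ResA (A : Type u) [CommRing A] (M' : Type u) [AddCommGroup M'] [Module A M']
    (J : Ideal A) (b : ℕ → ℕ) (D : ∀ i, (Fin (b (i+1)) → A) →ₗ[A] (Fin (b i) → A)) (c n : ℕ) :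
    Prop where
  dd : ∀ i x, D i (D (i+1) x) = 0
  b0 : b 0 = 0
  bn : ∀ i, n < i → b i = 0
  min : ∀ i x l, D i x l ∈ J
  fil : ∀ j, Fil A M' (Hc (D (j+1)) (D j))
  top : Nonempty (Hc (D (c+1)) (D c) ≃ₗ[A] M')
  van : ∀ j, c < j → Subsingleton (Hc (D (j+1)) (D j))

lemma Hc_restrict {X Y Z : Type u} [AddCommGroup X] [Module A X] [AddCommGroup Y] [Module A Y]
    [AddCommGroup Z] [Module A Z] [Module Q X] [Module Q Y] [Module Q Z] [IsScalarTower Q A X]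
    [IsScalarTower Q A Y] [IsScalarTower Q A Z] (a : X →ₗ[A] Y) (b : Y →ₗ[A] Z) :
    Nonempty (Hc (a.restrictScalars Q) (b.restrictScalars Q) ≃ₗ[Q] Hc a b) := by
  let ψ : LinearMap.ker (b.restrictScalars Q) →ₗ[Q] Hc a b :=
    { toFun := fun z => Hc.mk a b ⟨z.1, z.2⟩
      map_add' := fun x y => by rw [← map_add]; rfl
      map_smul' := fun r x => by
        rw [RingHom.id_apply, ← algebraMap_smul A r (Hc.mk a b _), ← map_smul]
        refine congrArg _ (Subtype.ext ?_)
        exact (algebraMap_smul A r x.1).symm }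
  have hψ : ∀ z, ψ z = 0 ↔ ∃ x, a x = z.1 := fun z => Hc.mk_eq_zero a b _
  obtain ⟨β, hβ⟩ := exists_factor (Hc.mk (a.restrictScalars Q) (b.restrictScalars Q))
    (Hc.mk_surj _ _) ψ (fun e he => (hψ e).2 ((Hc.mk_eq_zero _ _ _).1 he))
  refine ⟨LinearEquiv.ofBijective β ⟨?_, ?_⟩⟩
  · rw [injective_iff_map_eq_zero]
    intro y hy
    obtain ⟨z, rfl⟩ := Hc.mk_surj _ _ y
    rw [hβ] at hy
    exact (Hc.mk_eq_zero _ _ _).2 ((hψ _).1 hy)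
  · intro y
    obtain ⟨x, rfl⟩ := Hc.mk_surj _ _ y
    exact ⟨Hc.mk _ _ ⟨x.1, x.2⟩, hβ _⟩

theorem exists_resA [IsLocalRing Q] [IsNoetherianRing Q]
    (xs : List Q) (hxs : IsWeaklyRegular Q xs)
    (hm : Ideal.ofList xs = IsLocalRing.maximalIdeal Q)
    (hs : Function.Surjective (algebraMap Q A)) (rs : List Q) (hrs : IsWeaklyRegular Q rs)
    (hker : RingHom.ker (algebraMap Q A) = Ideal.ofList rs)
    (J : Ideal A) (hJ : ∀ q ∈ IsLocalRing.maximalIdeal Q, algebraMap Q A q ∈ J)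
    (M' : Type u) [AddCommGroup M'] [Module A M'] [Module.Finite A M'] :
    ∃ b D c n, ResA A M' J b D c n := by
  let _ : Module Q M' := Module.compHom M' (algebraMap Q A)
  have : IsScalarTower Q A M' := IsScalarTower.of_algebraMap_smul fun _ _ => rfl
  have : Module.Finite Q A := Module.Finite.of_surjective (Algebra.linearMap Q A) hs
  have : Module.Finite Q M' := Module.Finite.trans A M'
  obtain ⟨b, D, dd, b1, b0, hmin, ⟨htop⟩, hv⟩ := exists_min_res (Q := Q) M'
  obtain ⟨n, hn⟩ := finite_length xs hxs hm b D dd hmin hv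
  let K := frCx b D dd
  have hsub : Subsingleton (K.C 1) := by
    change Subsingleton (Fin (b 1) → Q)
    rw [b1]; infer_instance
  have inv : Inv1 M' rs 1 K := by
    refine ⟨fun j => ?_, hsub, ⟨htop⟩, hv, fun g hg => ?_⟩
    · rcases j with _ | _ | j
      · have : Subsingleton (K.H 0) := (Hc.mk_surj _ _).subsingleton
        exact (Fil.closed M').zero _
      · exact (Fil.closed M').self _ htop
      · have := hv (j+2) (by omega)
        exact (Fil.closed M').zero _
    · have : ∀ i, Module.Projective Q (K.C i) := fun i =>
        inferInstanceAs (Module.Projective Q (Fin (b i) → Q))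
      refine nullH_of_kill K hsub g (fun x => ?_) hv
      apply htop.injective
      rw [map_smul, map_zero]
      refine kill_of_tower (A := A) M' g ?_ _
      rw [← RingHom.mem_ker, hker]
      exact Ideal.subset_span hg
  let π : ∀ i, (Fin (b i) → Q) →ₗ[Q] (Fin (b i) → A) := fun i =>
    (Algebra.linearMap Q A).compLeft (Fin (b i))
  have πs : ∀ i, Function.Surjective (π i) := fun i => hs.comp_left
  have πk : ∀ i, LinearMap.ker (π i) = Ideal.ofList rs • ⊤ := fun i => by
    rw [← hker]; exact pi_ker _ _
  have hD : ∀ i, ∃ E : (Fin (b (i+1)) → A) →ₗ[Q] (Fin (b i) → A), ∀ x,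
      E (π (i+1) x) = (π i ∘ₗ D i) x := fun i =>
    exists_factor _ (πs _) _ (fun e he => by
      have : e ∈ LinearMap.ker (π (i+1)) := he
      rw [πk] at this
      change D i e ∈ LinearMap.ker (π i)
      rw [πk]
      exact Submodule.smul_top_le_comap_smul_top _ (D i) this)
  choose E hE using hD
  let E' : ∀ i, (Fin (b (i+1)) → A) →ₗ[A] (Fin (b i) → A) := fun i =>
    (E i).extendScalarsOfSurjective hs
  have hE' : ∀ i x, E' i (π (i+1) x) = π i (D i x) := hE
  have dd' : ∀ i x, E' i (E' (i+1) x) = 0 := by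
    intro i x
    obtain ⟨x, rfl⟩ := πs _ x
    rw [hE', hE', dd, map_zero]
  let L : Cx Q :=
    { C := fun i => Fin (b i) → A
      d := fun i => (E' i).restrictScalars Q
      dd := dd' }
  let p : Quo K L :=
    { π := π
      comm := fun i x => (hE' i x).symm
      surj := πs }
  have inv' := inv1_of_quo M' rs 1 K L p (fun i => isWeaklyRegular_pi rs hrs (b i)) πk inv
  have hiso : ∀ j, Nonempty (L.H j ≃ₗ[Q] Hc (E' (j+1)) (E' j)) := fun j => Hc_restrict _ _
  refine ⟨b, E', 1 + rs.length, n, dd', b0, hn, ?_, ?_, ?_, ?_⟩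
  · intro i x l
    obtain ⟨x, rfl⟩ := πs _ x
    rw [hE']
    exact hJ _ (hmin i x l)
  · intro j
    exact Fil.toA hs M' _ ((inv'.fil j).congr (hiso j).some)
  · obtain ⟨e⟩ := inv'.top
    exact ⟨((hiso _).some.symm.trans e).extendScalarsOfSurjective hs⟩
  · intro j hj
    have := inv'.van j hj
    exact (hiso j).some.symm.injective.subsingleton

end QtoA
end DF

namespace DF

section AtoR
open TensorProduct
variable {R A : Type u} [CommRing R] [CommRing A] [Algebra R A]
  (k : Type u) [AddCommGroup k] [Module R k]

lemma Fil.toR {M' : Type u} [AddCommGroup M'] [Module A M'] [Module R M'] [IsScalarTower R A M']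
    {P : ∀ (X : Type u) [AddCommGroup X] [Module R X], Prop} (hP : FilClosed R M' P)
    (X : Type u) [AddCommGroup X] [Module A X] [Module R X] [IsScalarTower R A X]
    (h : Fil A M' X) : P X := by
  refine h (fun X _ _ => ∀ (_ : Module R X) (_ : IsScalarTower R A X), P X)
    ⟨?_, ?_, ?_⟩ _ inferInstance
  · intro X _ _ _ _ _
    exact hP.zero X
  · intro X _ _ e _ _
    exact hP.self X (e.restrictScalars R)
  · intro X Y Z _ _ _ _ _ _ f g hfg hX hZ _ _
    let _ : Module R X := Module.compHom X (algebraMap R A)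
    let _ : Module R Z := Module.compHom Z (algebraMap R A)
    have : IsScalarTower R A X := IsScalarTower.of_algebraMap_smul fun _ _ => rfl
    have : IsScalarTower R A Z := IsScalarTower.of_algebraMap_smul fun _ _ => rfl
    exact hP.ext (f := f.restrictScalars R) (g := g.restrictScalars R)
      ⟨hfg.inj, hfg.exact, hfg.surj⟩ (hX _ inferInstance) (hZ _ inferInstance)

section
variable {N : Type u} [AddCommGroup N] [Module R N]

lemma tsub {X : Type u} [AddCommGroup X] [Module R X] [Subsingleton X] :
    Subsingleton (X ⊗[R] N) := by
  refine subsingleton_of_forall_eq 0 fun z => ?_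
  induction z with
  | zero => rfl
  | tmul x y => rw [Subsingleton.elim x 0, TensorProduct.zero_tmul]
  | add x y hx hy => rw [hx, hy, add_zero]

lemma filClosed_TV {TV : ∀ (X : Type u) [AddCommGroup X] [Module R X], Prop}
    (T : TorClass R N TV) (M' : Type u) [AddCommGroup M'] [Module R M'] (hM' : TV M') (t : ℕ)
    (ht : DGE R k (M' ⊗[R] N) t) :
    FilClosed R M' (fun X _ _ => TV X ∧ DGE R k (X ⊗[R] N) t) where
  zero X _ _ _ := ⟨T.zero, fun j _ => by
    have : Subsingleton (X ⊗[R] N) := tsub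
    exact EX_of_subsingleton k j⟩
  self X _ _ e := ⟨T.congr e.symm hM', fun j hj => EX_congr k (e.rTensor N) j (ht j hj)⟩
  ext h hX hZ := ⟨T.ext h hX.1 hZ.1, fun j hj =>
    (T.ses h hZ.1).ext_van₂ k j (hX.2 j hj) (hZ.2 j hj)⟩

lemma DGE_pi {A : Type u} [AddCommGroup A] [Module R A] (n d : ℕ) (h : DGE R k (A ⊗[R] N) d) :
    DGE R k ((Fin n → A) ⊗[R] N) d := by
  intro j hj
  have := h j hj
  refine subsingleton_of_forall_eq 0 fun x => ?_
  rw [← EXmap_id k j x]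
  have e : (LinearMap.id : (Fin n → A) ⊗[R] N →ₗ[R] _) =
      ∑ l, (LinearMap.single R (fun _ : Fin n => A) l).rTensor N ∘ₗ
        (LinearMap.proj (R := R) (φ := fun _ : Fin n => A) l).rTensor N := by
    refine TensorProduct.ext' fun v y => ?_
    simp only [LinearMap.sum_apply, LinearMap.comp_apply, LinearMap.rTensor_tmul,
      LinearMap.id_apply, ← TensorProduct.sum_tmul]
    congr 1
    exact (Finset.univ_sum_single v).symm
  rw [e, EXmap_sum]
  refine Finset.sum_eq_zero fun l _ => ?_
  rw [EXmap_comp, Subsingleton.elim (EXmap k _ j x) 0, map_zero]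

lemma Nontriv_pi {A : Type u} [AddCommGroup A] [Module R A] (n d : ℕ) (hn : n ≠ 0)
    (h : Nontrivial (EX R k (A ⊗[R] N) d)) :
    Nontrivial (EX R k ((Fin n → A) ⊗[R] N) d) := by
  let l : Fin n := ⟨0, by omega⟩
  have e : (LinearMap.proj (R := R) (φ := fun _ : Fin n => A) l).rTensor N ∘ₗ
    (LinearMap.single R (fun _ : Fin n => A) l).rTensor N = LinearMap.id := by
    rw [← LinearMap.rTensor_comp, LinearMap.proj_comp_single_same, LinearMap.rTensor_id]
  have : Function.Injective (EXmap k ((LinearMap.single R (fun _ : Fin n => A) l).rTensor N) d) := by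
    refine Function.LeftInverse.injective
      (g := EXmap k ((LinearMap.proj (R := R) (φ := fun _ : Fin n => A) l).rTensor N) d) fun x => ?_
    rw [← EXmap_comp, e, EXmap_id]
  exact this.nontrivial

lemma mem_smul_hom (I : Ideal R) (n m : ℕ) (D : (Fin n → A) →ₗ[A] (Fin m → A))
    (hD : ∀ x l, D x l ∈ I.map (algebraMap R A)) :
    (D.restrictScalars R) ∈ (I • ⊤ : Submodule R ((Fin n → A) →ₗ[R] (Fin m → A))) := by
  classical
  let Tm : Fin n → Fin m → A →ₗ[R] ((Fin n → A) →ₗ[R] (Fin m → A)) := fun j l =>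
    { toFun := fun a => LinearMap.single R (fun _ : Fin m => A) l ∘ₗ
        LinearMap.mulLeft R a ∘ₗ LinearMap.proj (R := R) (φ := fun _ : Fin n => A) j
      map_add' := fun a b => by ext; simp [add_mul, Pi.single_add]
      map_smul' := fun r a => by ext; simp [Pi.single_smul] }
  have e : D.restrictScalars R = ∑ j, ∑ l, Tm j l (D (Pi.single j 1) l) := by
    apply LinearMap.ext
    intro x
    funext l
    have hx : D x = ∑ j, x j • D (Pi.single j 1) := by
      conv_lhs => rw [pi_eq_sum_univ' x, map_sum]
      simp
    have h2 : ∀ j, (∑ l', Tm j l' (D (Pi.single j 1) l')) x l = D (Pi.single j 1) l * x j := by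
      intro j
      rw [LinearMap.sum_apply, Finset.sum_apply, Finset.sum_eq_single l]
      · simp [Tm]
      · intro b _ hb
        simp [Tm, hb.symm]
      · simp
    rw [LinearMap.sum_apply, Finset.sum_apply, Finset.sum_congr rfl fun j _ => h2 j]
    simp [hx, mul_comm]
  rw [e]
  refine Submodule.sum_mem _ fun j _ => Submodule.sum_mem _ fun l _ => ?_
  refine Submodule.smul_top_le_comap_smul_top I (Tm j l) ?_
  rw [Ideal.smul_top_eq_map]
  exact hD _ _
end

theorem count_of_resA [Module.Flat R A] (m : Ideal R) (hk : ∀ r ∈ m, ∀ y : k, r • y = 0)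
    (M' : Type u) [AddCommGroup M'] [Module A M'] [Module R M'] [IsScalarTower R A M']
    [Nontrivial M'] (b : ℕ → ℕ) (D : ∀ i, (Fin (b (i+1)) → A) →ₗ[A] (Fin (b i) → A)) (c n : ℕ)
    (res : ResA A M' (m.map (algebraMap R A)) b D c n) :
    ∃ p, ∀ (N : Type u) [AddCommGroup N] [Module R N]
      (TV : ∀ (X : Type u) [AddCommGroup X] [Module R X], Prop) (_ : TorClass R N TV)
      (_ : TV M') (d t : ℕ) (_ : DEQ R k (A ⊗[R] N) d) (_ : DEQ R k (M' ⊗[R] N) t),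
      d + c = p + t := by
  classical
  have hex : ∃ p, b (p+1) ≠ 0 := by
    refine ⟨c, fun h => ?_⟩
    have : Subsingleton (Fin (b (c+1)) → A) := by rw [h]; infer_instance
    have : Subsingleton (Hc (D (c+1)) (D c)) := (Hc.mk_surj _ _).subsingleton
    exact not_subsingleton M' (res.top.some.symm.injective.subsingleton)
  have hbd : ∀ p, b (p+1) ≠ 0 → p ≤ n := fun p hp => by
    by_contra h
    exact hp (res.bn _ (by omega))
  let p := Nat.findGreatest (fun p => b (p+1) ≠ 0) n
  have hp : b (p+1) ≠ 0 := by
    obtain ⟨p0, hp0⟩ := hex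
    exact Nat.findGreatest_spec (P := fun p => b (p+1) ≠ 0) (hbd p0 hp0) hp0
  have hpz : ∀ i, p < i → b (i+1) = 0 := fun i hi => by
    by_contra h
    exact Nat.findGreatest_is_greatest (P := fun p => b (p+1) ≠ 0) hi (hbd i h) h
  refine ⟨p, fun N _ _ TV T hTV d t hd ht => ?_⟩
  let ι : ∀ i, LinearMap.ker (D i) →ₗ[R] (Fin (b (i+1)) → A) := fun i =>
    (LinearMap.ker (D i)).subtype.restrictScalars R
  let π : ∀ i, (Fin (b (i+1)) → A) →ₗ[R] LinearMap.range (D i) := fun i =>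
    (D i).rangeRestrict.restrictScalars R
  have hle : ∀ i, LinearMap.range (D (i+1)) ≤ LinearMap.ker (D i) := fun i => by
    rintro _ ⟨x, rfl⟩
    exact res.dd i x
  let j : ∀ i, LinearMap.range (D (i+1)) →ₗ[R] LinearMap.ker (D i) := fun i =>
    (Submodule.inclusion (hle i)).restrictScalars R
  let q : ∀ i, LinearMap.ker (D i) →ₗ[R] Hc (D (i+1)) (D i) := fun i =>
    (Hc.mk (D (i+1)) (D i)).restrictScalars R
  have h1 : ∀ i, SES (ι i) (π i) := fun i => by
    refine ⟨Subtype.val_injective, fun x => ?_, LinearMap.surjective_rangeRestrict (D i)⟩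
    have : π i x = 0 ↔ D i x = 0 :=
      ⟨fun h => congrArg Subtype.val h, fun h => Subtype.ext h⟩
    rw [this]
    exact ⟨fun h => ⟨⟨x, h⟩, rfl⟩, fun ⟨y, hy⟩ => hy ▸ y.2⟩
  have h2 : ∀ i, SES (j i) (q i) := fun i => by
    refine ⟨Submodule.inclusion_injective (hle i), fun x => ?_, Hc.mk_surj _ _⟩
    rw [show q i x = 0 ↔ _ from Hc.mk_eq_zero _ _ x]
    exact ⟨fun ⟨y, hy⟩ => ⟨⟨x.1, y, hy⟩, rfl⟩, fun ⟨y, hy⟩ => by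
      obtain ⟨w, hw⟩ := y.2
      exact ⟨w, by rw [hw, ← hy]; rfl⟩⟩
  have hF := filClosed_TV k T M' hTV t ht.1
  have hH : ∀ i, TV (Hc (D (i+1)) (D i)) ∧ DGE R k (Hc (D (i+1)) (D i) ⊗[R] N) t := fun i =>
    Fil.toR (A := A) hF (Hc (D (i+1)) (D i)) (res.fil i)
  have hC : ∀ i, TV (Fin (b i) → A) := fun i => by
    have : Module.Flat R (Fin (b i) → A) := Module.Flat.trans R A _
    exact T.flat _
  have sub0 : Subsingleton (Fin (b 0) → A) := by rw [res.b0]; infer_instance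
  have sW0 : Subsingleton (LinearMap.range (D 0)) := Subtype.val_injective.subsingleton
  have hW : ∀ i, TV (LinearMap.range (D i)) := by
    intro i
    induction i with
    | zero => exact T.zero
    | succ i ih => exact T.ker (h2 i) (T.ker (h1 i) (hC _) ih) (hH i).1
  refine depth_count k (fun i => (Fin (b (i+1)) → A) ⊗[R] N) (fun i => LinearMap.ker (D i) ⊗[R] N)
    (fun i => LinearMap.range (D i) ⊗[R] N) (fun i => Hc (D (i+1)) (D i) ⊗[R] N)
    (fun i => (ι i).rTensor N) (fun i => (π i).rTensor N) (fun i => (j i).rTensor N)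
    (fun i => (q i).rTensor N) (fun i => T.ses (h1 i) (hW i)) (fun i => T.ses (h2 i) (hH i).1)
    tsub ?_ d t c p (fun i => DGE_pi k _ _ hd.1) ?_ ?_
    (fun i => (hH i).2) ?_ ?_
  · intro i n x
    rw [← LinearMap.rTensor_comp, ← LinearMap.rTensor_comp]
    have e : ι i ∘ₗ j i ∘ₗ π (i+1) = (D (i+1)).restrictScalars R := rfl
    rw [e]
    refine EXmap_mem_smul_top k m hk _ ?_ n x
    exact Submodule.smul_top_le_comap_smul_top m (LinearMap.rTensorHom N)
      (mem_smul_hom m _ _ (D (i+1)) (res.min (i+1)))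
  · exact Nontriv_pi k _ _ hp hd.2
  · intro i hi
    have : Subsingleton (Fin (b (i+1)) → A) := by rw [hpz i hi]; infer_instance
    exact tsub
  · obtain ⟨e⟩ := res.top
    exact (DEQ_congr k ((e.restrictScalars R).rTensor N).symm t ht).2
  · intro i hi
    have := res.van i hi
    exact tsub

end AtoR
end DF

namespace DF

section DepthPart
open TensorProduct
open scoped Pointwise
variable {R : Type u} [CommRing R] (k : Type u) [AddCommGroup k] [Module R k]

lemma ses_quotSMulTop {Y : Type u} [AddCommGroup Y] [Module R Y] (r : R) (hr : IsSMulRegular Y r) :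
    SES (r • (LinearMap.id : Y →ₗ[R] Y)) (Submodule.mkQ (r • (⊤ : Submodule R Y))) := by
  refine ⟨hr, fun y => ?_, Submodule.mkQ_surjective _⟩
  rw [Submodule.mkQ_apply, Submodule.Quotient.mk_eq_zero, Submodule.mem_smul_pointwise_iff_exists]
  simp

lemma DGE_succ {Y : Type u} [AddCommGroup Y] [Module R Y] (r : R) (hk : ∀ y : k, r • y = 0)
    (hr : IsSMulRegular Y r) (n : ℕ) (h : DGE R k (QuotSMulTop r Y) n) : DGE R k Y (n+1) := by
  intro j hj
  have hi := (ses_quotSMulTop r hr).ext_inj₁ k j fun i hi => h i (by omega)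
  refine subsingleton_of_forall_eq 0 fun x => hi ?_
  rw [EXmap_smul_eq_zero k r hk, map_zero]

lemma DEQ_succ {Y : Type u} [AddCommGroup Y] [Module R Y] (r : R) (hk : ∀ y : k, r • y = 0)
    (hr : IsSMulRegular Y r) (n : ℕ) (h : DEQ R k (QuotSMulTop r Y) n) : DEQ R k Y (n+1) := by
  have h1 := DGE_succ k r hk hr n h.1
  refine ⟨h1, ?_⟩
  by_contra hc
  rw [not_nontrivial_iff_subsingleton] at hc
  exact not_subsingleton_iff_nontrivial.2 h.2
    ((ses_quotSMulTop r hr).ext_van₃ k n (h1 n (by omega)) hc)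

lemma DGE_of_reg {Y : Type u} [AddCommGroup Y] [Module R Y] (rs : List R)
    (h : IsWeaklyRegular Y rs) (hk : ∀ r ∈ rs, ∀ y : k, r • y = 0) : DGE R k Y rs.length := by
  induction rs generalizing Y with
  | nil => intro j hj; simp at hj
  | cons r rs ih =>
    rw [isWeaklyRegular_cons_iff] at h
    exact DGE_succ k r (hk r (by simp)) h.1 _ (ih h.2 fun r hr => hk r (by simp [hr]))

lemma DEQ_zero_of_hom {Y : Type u} [AddCommGroup Y] [Module R Y] (f : k →ₗ[R] Y) (hf : f ≠ 0) :
    DEQ R k Y 0 := by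
  refine ⟨fun j hj => by omega, ⟨⟨Abelian.Ext.mk₀ (ModuleCat.ofHom f), 0, fun h => hf ?_⟩⟩⟩
  rw [Abelian.Ext.mk₀_eq_zero_iff] at h
  exact congrArg ModuleCat.Hom.hom h

variable [IsLocalRing R] [IsNoetherianRing R]
open IsLocalRing

lemma exists_max_seq (A : Type u) [CommRing A] [Algebra R A] [Module.FaithfullyFlat R A]
    {X : Type u} [AddCommGroup X] [Module R X] [Module.Finite R X] (N : Submodule R X) :
    ∀ (Y : Type u) [AddCommGroup Y] [Module R Y] (g : X →ₗ[R] Y) (_ : Function.Surjective g)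
    (_ : LinearMap.ker g = N) (_ : Nontrivial Y),
    ∃ rs : List R, (∀ r ∈ rs, r ∈ maximalIdeal R) ∧ IsWeaklyRegular Y rs ∧
      DEQ R (R ⧸ maximalIdeal R) (A ⊗[R] Y) rs.length := by
  induction N using WellFoundedGT.induction with
  | ind N ih =>
  intro Y _ _ g hg hN hY
  have : Module.Finite R Y := Module.Finite.of_surjective g hg
  rcases subsingleton_or_nontrivial ((R ⧸ maximalIdeal R) →ₗ[R] Y) with hs | hs
  · obtain ⟨r, hr, hreg⟩ := IsSMulRegular.subsingleton_linearMap_iff.1 hs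
    have hr' : r ∈ maximalIdeal R := by
      rwa [Ideal.annihilator_quotient] at hr
    have hnt : Nontrivial (QuotSMulTop r Y) := nontrivial_quotSMulTop_of_mem_maximalIdeal Y hr'
    let g' : X →ₗ[R] QuotSMulTop r Y := Submodule.mkQ _ ∘ₗ g
    have hlt : N < LinearMap.ker g' := by
      refine lt_of_le_of_ne ?_ ?_
      · rw [← hN]
        exact LinearMap.ker_le_ker_comp _ _
      · intro h
        obtain ⟨y, hy⟩ := exists_ne (0 : Y)
        obtain ⟨x, hx⟩ := hg (r • y)
        have : x ∈ N := by
          rw [h, LinearMap.mem_ker]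
          change Submodule.mkQ _ (g x) = 0
          rw [hx]
          exact (ses_quotSMulTop r hreg).exact.apply_apply_eq_zero y
        rw [← hN, LinearMap.mem_ker, hx] at this
        exact hy (hreg (by simpa using this))
    obtain ⟨rs, h1, h2, h3⟩ := ih _ hlt (QuotSMulTop r Y) g'
      ((Submodule.mkQ_surjective _).comp hg) rfl hnt
    refine ⟨r :: rs, by simpa using ⟨hr', h1⟩, (isWeaklyRegular_cons_iff _ _ _).2 ⟨hreg, h2⟩, ?_⟩
    exact DEQ_succ _ r (fun y => Module.mem_annihilator.1 hr y) (hreg.lTensor A) _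
      (DEQ_congr _ (QuotSMulTop.tensorQuotSMulTopEquivQuotSMulTop r A Y) _ h3)
  · obtain ⟨f, hf⟩ := exists_ne (0 : (R ⧸ maximalIdeal R) →ₗ[R] Y)
    refine ⟨[], by simp, IsWeaklyRegular.nil R Y, ?_⟩
    refine DEQ_zero_of_hom _ (TensorProduct.mk R A Y 1 ∘ₗ f) fun h => hf ?_
    ext
    exact Module.FaithfullyFlat.tensorProduct_mk_injective (A := R) (B := A) Y
      (by simpa using LinearMap.congr_fun h 1)

theorem depth_eq (A : Type u) [CommRing A] [Algebra R A] [Module.FaithfullyFlat R A]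
    (X : Type u) [AddCommGroup X] [Module R X] [Module.Finite R X] [Nontrivial X] :
    ∃ n : ℕ, rdepth R X = n ∧ DEQ R (R ⧸ maximalIdeal R) (A ⊗[R] X) n := by
  obtain ⟨rs, h1, h2, h3⟩ := exists_max_seq A _ X (LinearMap.id : X →ₗ[R] X) Function.surjective_id rfl
    inferInstance
  refine ⟨rs.length, le_antisymm (sSup_le ?_) (le_sSup ⟨rs, rfl, h1, h2⟩), h3⟩
  rintro _ ⟨ss, rfl, hs1, hs2⟩
  by_contra hlt
  have hlt : rs.length < ss.length := by
    rw [not_le] at hlt; exact_mod_cast hlt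
  have := DGE_of_reg (R ⧸ maximalIdeal R) ss (hs2.isWeaklyRegular_lTensor (M₂ := A))
    (fun r hr y => by
      have : r ∈ Module.annihilator R (R ⧸ maximalIdeal R) := by
        rw [Ideal.annihilator_quotient]; exact hs1 r hr
      exact Module.mem_annihilator.1 this y)
  exact not_subsingleton_iff_nontrivial.2 h3.2 (this _ hlt)

lemma rdepth_of_subsingleton (X : Type u) [AddCommGroup X] [Module R X] [Subsingleton X] :
    rdepth R X = ⊤ := by
  rw [ENat.eq_top_iff_forall_ge]
  intro n
  refine le_sSup ⟨List.replicate n 0, by simp, fun r hr => ?_, ?_⟩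
  · rw [List.eq_of_mem_replicate hr]; simp
  · induction n generalizing X with
    | zero => exact IsWeaklyRegular.nil R X
    | succ n ih =>
      rw [List.replicate_succ, isWeaklyRegular_cons_iff]
      exact ⟨fun _ _ _ => Subsingleton.elim _ _, ih _⟩

lemma nontrivial_tensor (M N : Type u) [AddCommGroup M] [Module R M] [Module.Finite R M]
    [Nontrivial M] [AddCommGroup N] [Module R N] [Module.Finite R N] [Nontrivial N] :
    Nontrivial (M ⊗[R] N) := by
  let K := ResidueField R
  have hM : Nontrivial (K ⊗[R] M) := by
    rw [← not_subsingleton_iff_nontrivial, IsLocalRing.subsingleton_tensorProduct]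
    exact not_subsingleton M
  have hN : Nontrivial (K ⊗[R] N) := by
    rw [← not_subsingleton_iff_nontrivial, IsLocalRing.subsingleton_tensorProduct]
    exact not_subsingleton N
  have : Nontrivial ((K ⊗[R] M) ⊗[K] (K ⊗[R] N)) := inferInstance
  have e := AlgebraTensorModule.distribBaseChange R K M N
  have := e.symm.injective.nontrivial
  by_contra h
  rw [not_nontrivial_iff_subsingleton, ← IsLocalRing.subsingleton_tensorProduct (R := R)] at h
  exact not_subsingleton _ h

end DepthPart
end DF

namespace DF
open TensorProduct IsLocalRing

theorem core (R : Type u) [CommRing R] [IsLocalRing R] [IsNoetherianRing R]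
    (M N : Type u) [AddCommGroup M] [Module R M] [Module.Finite R M] [Nontrivial M]
    [AddCommGroup N] [Module R N] [Module.Finite R N] [Nontrivial N]
    (hv : ∀ i ≥ 1, Subsingleton (TorM R i M N))
    (Q : Type u) [CommRing Q] [IsLocalRing Q] [IsNoetherianRing Q]
    (A : Type u) [CommRing A] [Algebra R A] [Module.FaithfullyFlat R A] [Algebra Q A]
    (xs : List Q) (hxs : IsWeaklyRegular Q xs)
    (hxm : Ideal.ofList xs = IsLocalRing.maximalIdeal Q)
    (hφs : Function.Surjective (algebraMap Q A)) (rs : List Q) (hrs : IsWeaklyRegular Q rs)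
    (hker : RingHom.ker (algebraMap Q A) = Ideal.ofList rs)
    (hJ : ∀ q ∈ maximalIdeal Q, algebraMap Q A q ∈ (maximalIdeal R).map (algebraMap R A)) :
    rdepth R M + rdepth R N = rdepth R R + rdepth R (TensorProduct R M N) := by
  have := nontrivial_tensor (R := R) M N
  obtain ⟨b, D, c, n, res⟩ := exists_resA xs hxs hxm hφs rs hrs hker _ hJ (A ⊗[R] M)
  have : Nontrivial (A ⊗[R] M) :=
    (Module.FaithfullyFlat.tensorProduct_mk_injective (A := R) (B := A) M).nontrivial
  obtain ⟨p, hp⟩ := count_of_resA (R ⧸ maximalIdeal R) (maximalIdeal R) (fun r hr y => by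
      have : r ∈ Module.annihilator R (R ⧸ maximalIdeal R) := by
        rwa [Ideal.annihilator_quotient]
      exact Module.mem_annihilator.1 this y) (A ⊗[R] M) b D c n res
  obtain ⟨TV, T, hTV⟩ := exists_torClass M N hv
  obtain ⟨dM, hdM, qM⟩ := depth_eq (R := R) A M
  obtain ⟨dN, hdN, qN⟩ := depth_eq (R := R) A N
  obtain ⟨dR, hdR, qR⟩ := depth_eq (R := R) A R
  obtain ⟨dT, hdT, qT⟩ := depth_eq (R := R) A (M ⊗[R] N)
  have e1 := hp N TV T (hTV A) dN dT qN
    (DEQ_congr _ (TensorProduct.assoc R A M N).symm _ qT)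
  have e2 := hp R _ (torClass_flat R) trivial dR dM qR
    (DEQ_congr _ (TensorProduct.rid R (A ⊗[R] M)).symm _ qM)
  rw [hdM, hdN, hdR, hdT]
  norm_cast
  omega

theorem core2 (R : Type u) [CommRing R] [IsLocalRing R] [IsNoetherianRing R]
    (M N : Type u) [AddCommGroup M] [Module R M] [Module.Finite R M] [Nontrivial M]
    [AddCommGroup N] [Module R N] [Module.Finite R N] [Nontrivial N]
    (hv : ∀ i ≥ 1, Subsingleton (TorM R i M N))
    (Q : Type u) [CommRing Q] [IsLocalRing Q] [IsNoetherianRing Q]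
    (A : Type u) [CommRing A] [IsLocalRing A] [Algebra R A] [Module.FaithfullyFlat R A]
    (hA : maximalIdeal A = (maximalIdeal R).map (algebraMap R A))
    (xs : List Q) (hxs : IsWeaklyRegular Q xs)
    (hxm : Ideal.ofList xs = IsLocalRing.maximalIdeal Q)
    (rs : List Q) (hrn : ∀ r ∈ rs, r ∈ nonunits Q) (hrs : IsWeaklyRegular Q rs)
    (e : (Q ⧸ Ideal.span {x | x ∈ rs}) ≃+* A) :
    rdepth R M + rdepth R N = rdepth R R + rdepth R (TensorProduct R M N) := by
  let φ : Q →+* A := e.toRingHom.comp (Ideal.Quotient.mk _)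
  let _ : Algebra Q A := φ.toAlgebra
  have hφs : Function.Surjective (algebraMap Q A) :=
    e.surjective.comp Ideal.Quotient.mk_surjective
  have hker : RingHom.ker (algebraMap Q A) = Ideal.ofList rs := by
    ext q
    change e (Ideal.Quotient.mk _ q) = 0 ↔ _
    rw [map_eq_zero_iff e e.injective, Ideal.Quotient.eq_zero_iff_mem]
  have hkm : RingHom.ker (algebraMap Q A) ≤ maximalIdeal Q := by
    rw [hker]
    exact Ideal.span_le.2 hrn
  have hJ : ∀ q ∈ maximalIdeal Q,
      algebraMap Q A q ∈ (maximalIdeal R).map (algebraMap R A) := by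
    intro q hq
    rw [← hA, mem_maximalIdeal, mem_nonunits_iff]
    intro hu
    obtain ⟨a, ha⟩ := hu.exists_right_inv
    obtain ⟨p, rfl⟩ := hφs a
    have h1 : q * p - 1 ∈ maximalIdeal Q := hkm (by
      rw [RingHom.mem_ker, map_sub, map_mul, map_one, ha, sub_self])
    have h2 : q * p ∈ maximalIdeal Q := Ideal.mul_mem_right _ _ hq
    have h3 : (1 : Q) ∈ maximalIdeal Q := by
      have h4 := Ideal.sub_mem _ h2 h1
      rwa [sub_sub_cancel] at h4
    exact (Ideal.ne_top_iff_one _).1 (Ideal.IsPrime.ne_top inferInstance) h3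
  exact core R M N hv Q A xs hxs hxm hφs rs hrs hker hJ

theorem main (R : Type u) [CommRing R] (hR : IsCIRing R)
    (M N : Type u) [AddCommGroup M] [Module R M] [Module.Finite R M]
    [AddCommGroup N] [Module R N] [Module.Finite R N]
    (hv : ∀ i ≥ 1, Subsingleton (TorM R i M N)) :
    rdepth R M + rdepth R N = rdepth R R + rdepth R (TensorProduct R M N) := by
  obtain ⟨_, _, Q, _, ⟨_, _, xs, hxs, -, hxm⟩, rs, hrn, hrs, ⟨e⟩⟩ := hR
  rcases subsingleton_or_nontrivial M with hM | hM
  · have : Subsingleton (M ⊗[R] N) := tsub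
    rw [rdepth_of_subsingleton M, rdepth_of_subsingleton (M ⊗[R] N)]; simp
  rcases subsingleton_or_nontrivial N with hN | hN
  · have : Subsingleton (N ⊗[R] M) := tsub
    have : Subsingleton (M ⊗[R] N) := (TensorProduct.comm R M N).injective.subsingleton
    rw [rdepth_of_subsingleton N, rdepth_of_subsingleton (M ⊗[R] N)]; simp
  have hmR : Ideal.span (nonunits R) = maximalIdeal R := by
    exact Ideal.span_eq (maximalIdeal R)
  have hmQ : Ideal.span (nonunits Q) = maximalIdeal Q := by
    exact Ideal.span_eq (maximalIdeal Q)
  rw [hmR] at e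
  rw [hmQ] at hxm
  have : Module.FaithfullyFlat R (AdicCompletion (maximalIdeal R) R) :=
    Module.FaithfullyFlat.of_flat_of_isLocalHom
  exact core2 R M N hv Q (AdicCompletion (maximalIdeal R) R)
    AdicCompletion.maximalIdeal_eq_map xs hxs hxm rs hrn hrs e

end DF

/-- the depth formula over complete intersections for Tor-independent
modules. -/
theorem stmt13 (R : Type u) [CommRing R] (hR : IsCIRing R)
    (M N : Type u) [AddCommGroup M] [Module R M] [Module.Finite R M]
    [AddCommGroup N] [Module R N] [Module.Finite R N]
    (hv : ∀ i ≥ 1, Subsingleton (TorM R i M N)) :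
    rdepth R M + rdepth R N = rdepth R R + rdepth R (TensorProduct R M N) := by
  exact DF.main R hR M N hv

end
end

section
/- Let R be a Gorenstein local ring and M a finitely generated R-module satisfying Serre's condition (S_2). Then M is reflexive. -/
open RingTheory.Sequence CategoryTheory

universe u

noncomputable section

namespace Stmt15

open CategoryTheory Abelian

/-- Vanishing of `Ext^i_A(N, A)`. -/
def EV (A : Type u) [CommRing A] (N : Type u) [AddCommGroup N] [Module A N] (i : ℕ) : Prop :=
  Subsingleton (Ext (ModuleCat.of A N) (ModuleCat.of A A) i)

section ext
variable {A : Type u} [CommRing A]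
variable {N₁ N₂ N₃ : Type u} [AddCommGroup N₁] [Module A N₁] [AddCommGroup N₂] [Module A N₂]
  [AddCommGroup N₃] [Module A N₃]

/-- The short exact sequence attached to an exact pair of linear maps. -/
lemma exists_shortExact (f : N₁ →ₗ[A] N₂) (g : N₂ →ₗ[A] N₃) (hf : Function.Injective f)
    (hg : Function.Surjective g) (h : Function.Exact f g) :
    (ModuleCat.shortComplexOfCompEqZero f g h.linearMap_comp_eq_zero).ShortExact :=
  ModuleCat.shortComplex_shortExact _ h hf hg

lemma EV.mid (f : N₁ →ₗ[A] N₂) (g : N₂ →ₗ[A] N₃) (hf : Function.Injective f)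
    (hg : Function.Surjective g) (h : Function.Exact f g) {i : ℕ}
    (h1 : EV A N₁ i) (h3 : EV A N₃ i) : EV A N₂ i := by
  have hS := exists_shortExact f g hf hg h
  unfold EV at *
  refine subsingleton_of_forall_eq 0 fun x => ?_
  obtain ⟨y, hy⟩ := Ext.contravariant_sequence_exact₂ hS (ModuleCat.of A A) x
    (h1.elim _ _)
  rw [← hy, h3.elim y 0]
  simp

lemma EV.left (f : N₁ →ₗ[A] N₂) (g : N₂ →ₗ[A] N₃) (hf : Function.Injective f)
    (hg : Function.Surjective g) (h : Function.Exact f g) {i : ℕ}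
    (h2 : EV A N₂ i) (h3 : EV A N₃ (i + 1)) : EV A N₁ i := by
  have hS := exists_shortExact f g hf hg h
  unfold EV at *
  refine subsingleton_of_forall_eq 0 fun x => ?_
  obtain ⟨y, hy⟩ := Ext.contravariant_sequence_exact₁ hS (ModuleCat.of A A) x (add_comm 1 i)
    (h3.elim _ _)
  rw [← hy, h2.elim y 0]
  simp

lemma EV.right (f : N₁ →ₗ[A] N₂) (g : N₂ →ₗ[A] N₃) (hf : Function.Injective f)
    (hg : Function.Surjective g) (h : Function.Exact f g) {i : ℕ}
    (h1 : EV A N₁ i) (h2 : EV A N₂ (i + 1)) : EV A N₃ (i + 1) := by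
  have hS := exists_shortExact f g hf hg h
  unfold EV at *
  refine subsingleton_of_forall_eq 0 fun x => ?_
  obtain ⟨y, hy⟩ := Ext.contravariant_sequence_exact₃ hS (ModuleCat.of A A) x (h2.elim _ _)
    (add_comm 1 i)
  rw [← hy, h1.elim y 0]
  simp

lemma EV.of_projective [Module.Projective A N₁] (i : ℕ) : EV A N₁ (i + 1) := by
  have : Projective (ModuleCat.of A N₁) := (IsProjective.iff_projective N₁).mp inferInstance
  exact subsingleton_of_forall_eq 0 fun x => Ext.eq_zero_of_projective x

lemma EV.equiv (e : N₁ ≃ₗ[A] N₂) {i : ℕ} (h : EV A N₁ i) : EV A N₂ i := by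
  unfold EV at *
  refine subsingleton_of_forall_eq 0 fun x => ?_
  have : x = (Ext.mk₀ e.toModuleIso.inv).comp ((Ext.mk₀ e.toModuleIso.hom).comp x (zero_add i))
    (zero_add i) := by
    rw [Ext.mk₀_comp_mk₀_assoc, Iso.inv_hom_id, Ext.mk₀_id_comp]
  rw [this, h.elim ((Ext.mk₀ e.toModuleIso.hom).comp x (zero_add i)) 0]
  simp

lemma EV.of_subsingleton [Subsingleton N₁] (i : ℕ) : EV A N₁ i := by
  unfold EV
  refine subsingleton_of_forall_eq 0 fun x => ?_
  rw [← Ext.mk₀_id_comp x, (ModuleCat.isZero_of_subsingleton (ModuleCat.of A N₁)).eq_zero_of_src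
    (𝟙 _)]
  simp

lemma EV.hom_zero (h : EV A N₁ 0) (f : N₁ →ₗ[A] A) : f = 0 := by
  have := Ext.homEquiv₀.symm.injective (h.elim (Ext.homEquiv₀.symm (ModuleCat.ofHom f))
    (Ext.homEquiv₀.symm (ModuleCat.ofHom 0)))
  simpa using congrArg ModuleCat.Hom.hom this

/-- If `Ext^1(N₃, A) = 0`, functionals extend. -/
lemma EV.extend (f : N₁ →ₗ[A] N₂) (g : N₂ →ₗ[A] N₃) (hf : Function.Injective f)
    (hg : Function.Surjective g) (h : Function.Exact f g)
    (h3 : EV A N₃ 1) (φ : N₁ →ₗ[A] A) : ∃ ψ : N₂ →ₗ[A] A, ψ ∘ₗ f = φ := by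
  have hS := exists_shortExact f g hf hg h
  unfold EV at *
  obtain ⟨y, hy⟩ := Ext.contravariant_sequence_exact₁ hS (ModuleCat.of A A)
    (Ext.homEquiv₀.symm (ModuleCat.ofHom φ)) (add_comm 1 0) (h3.elim _ _)
  obtain ⟨y, rfl⟩ := Ext.homEquiv₀.symm.surjective y
  refine ⟨y.hom, ?_⟩
  rw [Ext.homEquiv₀_symm_apply, Ext.homEquiv₀_symm_apply, Ext.mk₀_comp_mk₀] at hy
  have := Ext.homEquiv₀.symm.injective hy
  exact congrArg ModuleCat.Hom.hom this

/-- Nakayama for `Ext`. -/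
lemma EV.of_regular [IsNoetherianRing A] [IsLocalRing A] [Module.Finite A N₁] {x : A}
    (hx : x ∈ IsLocalRing.maximalIdeal A) (hreg : IsSMulRegular N₁ x) {i : ℕ}
    (h : EV A (QuotSMulTop x N₁) (i + 1)) : EV A N₁ i := by
  have hS := IsSMulRegular.smulShortComplex_shortExact (M := ModuleCat.of A N₁) hreg
  unfold EV at *
  let E := Ext (ModuleCat.of A N₁) (ModuleCat.of A A) i
  have hE : ∀ e : E, ∃ e' : E, x • e' = e := by
    intro e
    obtain ⟨y, hy⟩ := Ext.contravariant_sequence_exact₁ hS (ModuleCat.of A A) e (add_comm 1 i)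
      (h.elim _ _)
    refine ⟨y, ?_⟩
    rw [← hy, ModuleCat.smulShortComplex_f_eq_smul_id]
    have h2 : x • y = (Ext.mk₀ (x • 𝟙 ((ModuleCat.of A N₁).smulShortComplex x).X₂)).comp y
        (zero_add i) := by
      rw [Ext.mk₀_smul, Ext.smul_comp, Ext.mk₀_id_comp]
    exact h2
  have : (⊤ : Submodule A E) = ⊥ := by
    apply Submodule.eq_bot_of_le_smul_of_le_jacobson_bot (IsLocalRing.maximalIdeal A) _
      (Module.Finite.fg_top)
    · intro e _
      obtain ⟨e', rfl⟩ := hE e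
      exact Submodule.smul_mem_smul hx trivial
    · exact (IsLocalRing.jacobson_eq_maximalIdeal ⊥ bot_ne_top).ge
  exact (Submodule.subsingleton_iff A).mp (subsingleton_of_bot_eq_top this.symm)

end ext

end Stmt15


namespace Stmt15

open CategoryTheory Abelian IsLocalRing
open scoped Pointwise

set_option linter.unusedSectionVars false

section loc
variable {A : Type u} [CommRing A] [IsNoetherianRing A] [IsLocalRing A]

/-- A nonzero element killed by the maximal ideal. -/
def Soc (A : Type u) [CommRing A] [IsLocalRing A] (N : Type u) [AddCommGroup N] [Module A N] :
    Prop :=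
  ∃ n : N, n ≠ 0 ∧ ∀ a ∈ maximalIdeal A, a • n = 0

lemma Soc.exists_embedding {N : Type u} [AddCommGroup N] [Module A N] (h : Soc A N) :
    ∃ f : (A ⧸ maximalIdeal A) →ₗ[A] N, Function.Injective f := by
  obtain ⟨n, hn, ha⟩ := h
  refine ⟨Submodule.liftQ _ (LinearMap.toSpanSingleton A N n) (fun a h => by simpa using ha a h), ?_⟩
  rw [← LinearMap.ker_eq_bot, Submodule.ker_liftQ_eq_bot]
  intro a h
  by_contra hu
  have hu : IsUnit a := by simpa using hu
  exact hn ((hu.smul_eq_zero).mp (by simpa using h))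

/-- Either the maximal ideal contains a regular element, or there is a socle element. -/
lemma exists_regular_of_not_soc {N : Type u} [AddCommGroup N] [Module A N] [Module.Finite A N]
    (h : ¬ Soc A N) : ∃ x ∈ maximalIdeal A, IsSMulRegular N x := by
  by_contra! hc
  have hsub : ((maximalIdeal A : Ideal A) : Set A) ⊆
      ⋃ p ∈ ((associatedPrimes.finite A N).toFinset : Set (Ideal A)), ((id p : Ideal A) : Set A) := by
    have := biUnion_associatedPrimes_eq_compl_regular A N
    intro x hx
    simp only [Set.Finite.coe_toFinset, id]
    rw [this]
    exact hc x hx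
  rw [Ideal.subset_union_prime (0 : Ideal A) 0] at hsub
  · obtain ⟨p, hp, hle⟩ := hsub
    have hp : IsAssociatedPrime p N := (Set.Finite.mem_toFinset _).mp hp
    rw [isAssociatedPrime_iff_exists_injective_linearMap] at hp
    obtain ⟨hpp, f, hf⟩ := hp
    have hpm : p = maximalIdeal A :=
      le_antisymm (le_maximalIdeal hpp.ne_top) hle
    refine h ⟨f (Ideal.Quotient.mk p 1), ?_, ?_⟩
    · rw [Ne, map_eq_zero_iff f hf, Ideal.Quotient.eq_zero_iff_mem]
      exact fun h1 => hpp.ne_top ((Ideal.eq_top_iff_one p).mpr h1)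
    · intro a ha
      rw [← map_smul, map_eq_zero_iff f hf]
      change Ideal.Quotient.mk p (a * 1) = 0
      rw [Ideal.Quotient.eq_zero_iff_mem, mul_one, hpm]
      exact ha
  · intro p hp _ _
    have hp : IsAssociatedPrime p N := (Set.Finite.mem_toFinset _).mp hp
    exact hp.isPrime

/-- Top degree is detected on the residue field. -/
lemma EV.of_residue {n : ℕ}
    (h1 : ∀ (N : Type u) [AddCommGroup N] [Module A N] [Module.Finite A N], EV A N (n + 1))
    (hk : EV A (A ⧸ maximalIdeal A) n)
    (N : Type u) [AddCommGroup N] [Module A N] [Module.Finite A N] : EV A N n := by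
  refine IsNoetherianRing.induction_on_isQuotientEquivQuotientPrime A (M := N) inferInstance
    (motive := fun N _ _ _ => EV A N n) ?_ ?_ ?_
  · intro N _ _ _ _
    exact EV.of_subsingleton n
  · intro N _ _ _ p e
    refine EV.equiv e.symm ?_
    by_cases hp : p.asIdeal = maximalIdeal A
    · rw [hp]; exact hk
    · obtain ⟨x, hx, hxp⟩ := SetLike.exists_of_lt
        (lt_of_le_of_ne (le_maximalIdeal p.2.ne_top) hp)
      refine EV.of_regular hx ?_ (h1 _)
      rw [isSMulRegular_iff_right_eq_zero_of_smul]
      intro y hy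
      obtain ⟨y, rfl⟩ := Ideal.Quotient.mk_surjective y
      have hy : Ideal.Quotient.mk p.asIdeal (x * y) = 0 := hy
      rw [Ideal.Quotient.eq_zero_iff_mem] at hy ⊢
      exact (p.2.mem_or_mem hy).resolve_left hxp
  · intro N₁ _ _ _ N₂ _ _ _ N₃ _ _ _ f g hf hg h i1 i3
    exact EV.mid f g hf hg h i1 i3

/-- Descending induction: if `k` embeds in a f.g. module `L` with `Ext^i(L,A)=0` for `i ≥ d`,
then finite injective dimension is at most `d - 1`. -/
lemma EV.descend {d : ℕ} (L : Type u) [AddCommGroup L] [Module A L] [Module.Finite A L]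
    (hL : Soc A L) (hEL : ∀ i, d ≤ i → EV A L i) (n : ℕ)
    (hn : ∀ i, n ≤ i → ∀ (N : Type u) [AddCommGroup N] [Module A N] [Module.Finite A N], EV A N i) :
    ∀ i, d ≤ i → ∀ (N : Type u) [AddCommGroup N] [Module A N] [Module.Finite A N], EV A N i := by
  induction n with
  | zero => exact fun i _ => hn i (Nat.zero_le i)
  | succ n ih =>
    by_cases hd : d ≤ n
    · apply ih
      intro i hi
      rcases hi.eq_or_lt with rfl | hi
      · intro N _ _ _
        refine EV.of_residue (hn (n + 1) le_rfl) ?_ N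
        obtain ⟨f, hf⟩ := hL.exists_embedding
        exact EV.left f (LinearMap.range f).mkQ hf (Submodule.mkQ_surjective _)
          (LinearMap.exact_map_mkQ_range f) (hEL n hd) (hn (n + 1) le_rfl _)
      · exact hn i hi
    · exact fun i hi => hn i (by omega)

/-- All `Ext^i(-,A)` vanish in large degrees. -/
def FinID (A : Type u) [CommRing A] : Prop :=
  ∃ n : ℕ, ∀ i, n ≤ i → ∀ (N : Type u) [AddCommGroup N] [Module A N], EV A N i

lemma EV.of_soc (hA : FinID A) (hs : Soc A A) (i : ℕ) (hi : 1 ≤ i)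
    (N : Type u) [AddCommGroup N] [Module A N] [Module.Finite A N] : EV A N i := by
  obtain ⟨n, hn⟩ := hA
  refine EV.descend (d := 1) A hs ?_ n (fun i hi N _ _ _ => hn i hi N) i hi N
  intro i hi
  obtain ⟨j, rfl⟩ := Nat.exists_eq_add_of_le' hi
  exact EV.of_projective j

lemma minimal_embeds (p : Ideal A) (hp : p ∈ minimalPrimes A) :
    ∃ f : (A ⧸ p) →ₗ[A] A, Function.Injective f := by
  have h := Module.associatedPrimes.minimalPrimes_annihilator_subset_associatedPrimes A A
    (a := p) (by
      rw [Module.annihilator_eq_bot.mpr inferInstance]; exact hp)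
  exact ((isAssociatedPrime_iff_exists_injective_linearMap p A).mp h).2

lemma prime_eq_of_soc (hA : FinID A) (hs : Soc A A) (q : Ideal A) (hq : q.IsPrime) :
    q = maximalIdeal A := by
  obtain ⟨p, hp, hpq⟩ := Ideal.exists_minimalPrimes_le (bot_le : (⊥ : Ideal A) ≤ q)
  have hpp : p.IsPrime := hp.1.1
  suffices p = maximalIdeal A from
    le_antisymm (le_maximalIdeal hq.ne_top) (this ▸ hpq)
  by_contra hne
  obtain ⟨x, hx, hxp⟩ := SetLike.exists_of_lt (lt_of_le_of_ne (le_maximalIdeal hpp.ne_top) hne)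
  obtain ⟨f, hf⟩ := minimal_embeds p hp
  have h0 : EV A (A ⧸ p) 0 := by
    refine EV.of_regular hx ?_ (EV.of_soc hA hs 1 le_rfl _)
    rw [isSMulRegular_iff_right_eq_zero_of_smul]
    intro y hy
    obtain ⟨y, rfl⟩ := Ideal.Quotient.mk_surjective y
    have hy : Ideal.Quotient.mk p (x * y) = 0 := hy
    rw [Ideal.Quotient.eq_zero_iff_mem] at hy ⊢
    exact (hpp.mem_or_mem hy).resolve_left hxp
  have hf0 := h0.hom_zero f
  have : Ideal.Quotient.mk p 1 = 0 := hf (by rw [hf0]; rfl)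
  rw [Ideal.Quotient.eq_zero_iff_mem] at this
  exact hpp.ne_top ((Ideal.eq_top_iff_one p).mpr this)

lemma soc_of_prime_eq {N : Type u} [AddCommGroup N] [Module A N] [Module.Finite A N]
    [Nontrivial N]
    (h : ∀ q : Ideal A, q.IsPrime → Module.annihilator A N ≤ q → q = maximalIdeal A) :
    Soc A N := by
  by_contra hc
  obtain ⟨p, hp⟩ := associatedPrimes.nonempty A N
  have hp : IsAssociatedPrime p N := hp
  rw [isAssociatedPrime_iff_exists_injective_linearMap] at hp
  obtain ⟨hpp, f, hf⟩ := hp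
  have hpm : p = maximalIdeal A := by
    refine h p hpp ?_
    intro a ha
    rw [Module.mem_annihilator] at ha
    have : f (Ideal.Quotient.mk p a) = 0 := by
      have h2 : Ideal.Quotient.mk p a = a • (Ideal.Quotient.mk p 1) := by
        rw [← Ideal.Quotient.mk_eq_mk, ← Ideal.Quotient.mk_eq_mk, ← Submodule.Quotient.mk_smul]
        simp
      rw [h2, map_smul, ha]
    rw [map_eq_zero_iff f hf, Ideal.Quotient.eq_zero_iff_mem] at this
    exact this
  obtain ⟨x, hx, hreg⟩ := exists_regular_of_not_soc hc
  rw [isSMulRegular_iff_right_eq_zero_of_smul] at hreg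
  have h1 : Ideal.Quotient.mk p 1 = 0 := by
    apply hf
    rw [map_zero]
    apply hreg
    rw [← map_smul, map_eq_zero_iff f hf]
    change Ideal.Quotient.mk p (x * 1) = 0
    rw [Ideal.Quotient.eq_zero_iff_mem, mul_one, hpm]
    exact hx
  rw [Ideal.Quotient.eq_zero_iff_mem] at h1
  exact hpp.ne_top ((Ideal.eq_top_iff_one p).mpr h1)

/-- In dimension at most one, `Ext^2(-,A) = 0`. -/
lemma EV.two (hA : FinID A)
    (hdim : ∀ q : Ideal A, q.IsPrime → q ≠ maximalIdeal A → q ∈ minimalPrimes A)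
    (N : Type u) [AddCommGroup N] [Module A N] [Module.Finite A N] : EV A N 2 := by
  by_cases hs : Soc A A
  · exact EV.of_soc hA hs 2 (by omega) N
  obtain ⟨x, hx, hreg⟩ := exists_regular_of_not_soc hs
  obtain ⟨n, hn⟩ := hA
  have hnt : Nontrivial (QuotSMulTop x A) := by
    rw [Submodule.Quotient.nontrivial_iff]
    intro h
    have h1 : (1 : A) ∈ x • (⊤ : Submodule A A) := by rw [h]; trivial
    obtain ⟨y, -, hy⟩ := (Submodule.mem_smul_pointwise_iff_exists _ _ _).mp h1
    exact hx (IsUnit.of_mul_eq_one y hy)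
  refine EV.descend (d := 2) (QuotSMulTop x A) ?_ ?_ n (fun i hi N _ _ _ => hn i hi N) 2 le_rfl N
  · refine soc_of_prime_eq ?_
    intro q hq hle
    by_contra hne
    obtain ⟨f, hf⟩ := minimal_embeds q (hdim q hq hne)
    have hxq : x ∈ q := by
      apply hle
      rw [Module.mem_annihilator]
      intro m
      obtain ⟨m, rfl⟩ := Submodule.Quotient.mk_surjective _ m
      rw [← Submodule.Quotient.mk_smul, Submodule.Quotient.mk_eq_zero]
      exact Submodule.smul_mem_pointwise_smul _ _ _ trivial
    rw [isSMulRegular_iff_right_eq_zero_of_smul] at hreg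
    have h1 : Ideal.Quotient.mk q 1 = 0 := by
      apply hf
      rw [map_zero]
      apply hreg
      rw [← map_smul, map_eq_zero_iff f hf]
      change Ideal.Quotient.mk q (x * 1) = 0
      rw [Ideal.Quotient.eq_zero_iff_mem, mul_one]
      exact hxq
    rw [Ideal.Quotient.eq_zero_iff_mem] at h1
    exact hq.ne_top ((Ideal.eq_top_iff_one q).mpr h1)
  · intro i hi
    obtain ⟨j, rfl⟩ := Nat.exists_eq_add_of_le' hi
    refine EV.right (i := j + 1) (LinearMap.lsmul A A x) (x • (⊤ : Submodule A A)).mkQ hreg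
      (Submodule.mkQ_surjective _) ?_ (EV.of_projective j) (EV.of_projective (j + 1))
    intro y
    rw [Submodule.mkQ_apply, Submodule.Quotient.mk_eq_zero,
      Submodule.mem_smul_pointwise_iff_exists]
    simp

end loc

end Stmt15


namespace Stmt15

open CategoryTheory Abelian IsLocalRing

section refl
variable {A : Type u} [CommRing A] [IsNoetherianRing A]

/-- Image of a map into a f.g. free module, `Ext^1` vanishes. -/
lemma EV.one_of_embed
    (h2 : ∀ (N : Type u) [AddCommGroup N] [Module A N] [Module.Finite A N], EV A N 2)
    {C F : Type u} [AddCommGroup C] [Module A C] [AddCommGroup F] [Module A F]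
    [Module.Free A F] [Module.Finite A F] (f : C →ₗ[A] F) (hf : Function.Injective f) :
    EV A C 1 :=
  EV.left f (LinearMap.range f).mkQ hf (Submodule.mkQ_surjective _)
    (LinearMap.exact_map_mkQ_range f) (EV.of_projective 0) (h2 _)

/-- The dual of a f.g. module embeds in a f.g. free module. -/
lemma dual_embed (K : Type u) [AddCommGroup K] [Module A K] [Module.Finite A K] :
    ∃ (n : ℕ) (f : Module.Dual A K →ₗ[A] (Fin n → A)), Function.Injective f := by
  obtain ⟨n, π, hπ⟩ := Module.Finite.exists_fin' A K
  refine ⟨n, LinearMap.pi fun i => Module.Dual.eval A K (π (Pi.single i 1)), ?_⟩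
  rw [← LinearMap.ker_eq_bot, LinearMap.ker_eq_bot']
  intro φ hφ
  have : φ ∘ₗ π = 0 := by
    refine LinearMap.pi_ext' fun i => ?_
    ext
    exact congrFun hφ i
  ext k
  obtain ⟨y, rfl⟩ := hπ k
  exact LinearMap.congr_fun this y

lemma eval_surjective
    (h2 : ∀ (N : Type u) [AddCommGroup N] [Module A N] [Module.Finite A N], EV A N 2)
    (N : Type u) [AddCommGroup N] [Module A N] [Module.Finite A N] :
    Function.Surjective (Module.Dual.eval A N) := by
  obtain ⟨F, _, _, _, _, π, hπ⟩ := Module.exists_finite_presentation A N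
  intro ξ
  let r : Module.Dual A F →ₗ[A] Module.Dual A (LinearMap.ker π) := (LinearMap.ker π).subtype.dualMap
  let C := LinearMap.range r
  have hC : EV A C 1 := by
    obtain ⟨n, f, hf⟩ := dual_embed (A := A) (LinearMap.ker π)
    -- change universe-safe codomain
    exact EV.one_of_embed h2 (f ∘ₗ C.subtype) (hf.comp Subtype.val_injective)
  obtain ⟨η, hη⟩ := EV.extend π.dualMap r.rangeRestrict
    (LinearMap.dualMap_injective_of_surjective hπ) r.surjective_rangeRestrict (by
      intro φ
      constructor
      · intro h
        have h : r φ = 0 := congrArg Subtype.val h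
        have hk : LinearMap.ker π ≤ LinearMap.ker φ := fun k hk =>
          LinearMap.congr_fun h ⟨k, hk⟩
        refine ⟨(LinearMap.ker π).liftQ φ hk ∘ₗ (π.quotKerEquivOfSurjective hπ).symm, ?_⟩
        ext y
        have : (π.quotKerEquivOfSurjective hπ).symm (π y) = (LinearMap.ker π).mkQ y := by
          rw [LinearEquiv.symm_apply_eq]; rfl
        simp [this]
      · rintro ⟨ψ, rfl⟩
        apply Subtype.ext
        ext k
        change ψ (π k) = 0
        rw [show π k = 0 from k.2, map_zero]) hC ξ
  obtain ⟨y, rfl⟩ := (Module.bijective_dual_eval A F).2 η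
  refine ⟨π y, ?_⟩
  rw [← hη]
  ext φ
  simp

lemma isReflexive_of_EV
    (h2 : ∀ (N : Type u) [AddCommGroup N] [Module A N] [Module.Finite A N], EV A N 2)
    (N : Type u) [AddCommGroup N] [Module A N] [Module.Finite A N] (h1 : EV A N 1) :
    Function.Bijective (Module.Dual.eval A N) := by
  refine ⟨?_, eval_surjective h2 N⟩
  rw [← LinearMap.ker_eq_bot, LinearMap.ker_eq_bot']
  intro x hx
  obtain ⟨F, _, _, _, _, π, hπ⟩ := Module.exists_finite_presentation A N
  obtain ⟨y, rfl⟩ := hπ x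
  let r : Module.Dual A F →ₗ[A] Module.Dual A (LinearMap.ker π) := (LinearMap.ker π).subtype.dualMap
  have hr : Function.Surjective r := by
    intro φ
    obtain ⟨ψ, hψ⟩ := EV.extend (LinearMap.ker π).subtype π Subtype.val_injective hπ
      (LinearMap.exact_subtype_ker_map π) h1 φ
    exact ⟨ψ, hψ⟩
  have hk : LinearMap.ker r ≤ LinearMap.ker (Module.Dual.eval A F y) := by
    intro φ h
    have hk : LinearMap.ker π ≤ LinearMap.ker φ := fun k hk =>
      LinearMap.congr_fun h ⟨k, hk⟩
    have h3 := LinearMap.congr_fun hx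
      ((LinearMap.ker π).liftQ φ hk ∘ₗ (π.quotKerEquivOfSurjective hπ).symm.toLinearMap)
    have : (π.quotKerEquivOfSurjective hπ).symm (π y) = (LinearMap.ker π).mkQ y := by
      rw [LinearEquiv.symm_apply_eq]; rfl
    simpa [this] using h3
  let ζ := (LinearMap.ker r).liftQ (Module.Dual.eval A F y) hk ∘ₗ
    (r.quotKerEquivOfSurjective hr).symm.toLinearMap
  obtain ⟨k, hkz⟩ := eval_surjective h2 (LinearMap.ker π) ζ
  have : y = k := by
    apply (Module.bijective_dual_eval A F).1
    ext φ
    have h4 := LinearMap.congr_fun hkz (r φ)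
    have : (r.quotKerEquivOfSurjective hr).symm (r φ) = (LinearMap.ker r).mkQ φ := by
      rw [LinearEquiv.symm_apply_eq]; rfl
    simp only [ζ, LinearMap.comp_apply, LinearEquiv.coe_coe, this, Submodule.mkQ_apply,
      Submodule.liftQ_apply] at h4
    rw [← h4]
    rfl
  rw [this]
  exact k.2

end refl

section local_refl
variable {A : Type u} [CommRing A] [IsNoetherianRing A] [IsLocalRing A]

/-- Reflexivity in dimension at most one. -/
lemma isReflexive_dim_one (hA : FinID A)
    (hdim : ∀ q : Ideal A, q.IsPrime → q ≠ maximalIdeal A → q ∈ minimalPrimes A)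
    (N : Type u) [AddCommGroup N] [Module A N] [Module.Finite A N]
    (hN : ¬ Soc A A → ∃ x ∈ maximalIdeal A, IsSMulRegular N x) :
    Function.Bijective (Module.Dual.eval A N) := by
  refine isReflexive_of_EV (fun N _ _ _ => EV.two hA hdim N) N ?_
  by_cases hs : Soc A A
  · exact EV.of_soc hA hs 1 le_rfl N
  · obtain ⟨x, hx, hreg⟩ := hN hs
    exact EV.of_regular hx hreg (EV.two hA hdim _)

end local_refl

end Stmt15


namespace Stmt15

open CategoryTheory Abelian IsLocalRing

lemma hasInjDim_of_idLE (R : Type u) [CommRing R] (n : ℕ) :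
    ∀ (M : Type u) [AddCommGroup M] [Module R M], idLE R n M →
      HasInjectiveDimensionLE (ModuleCat.of R M) n := by
  induction n with
  | zero =>
    intro M _ _ h
    have h : Module.Injective R M := h
    have : Injective (ModuleCat.of R M) := (Module.injective_iff_injective_object R M).mp h
    exact injective_iff_hasInjectiveDimensionLT_one.mp this
  | succ n ih =>
    rintro M _ _ ⟨I, _, _, hI, f, hf, h⟩
    have hS := exists_shortExact f (LinearMap.range f).mkQ hf (Submodule.mkQ_surjective _)
      (LinearMap.exact_map_mkQ_range f)
    have : Injective (ModuleCat.of R I) := (Module.injective_iff_injective_object R I).mp hI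
    exact (hS.hasInjectiveDimensionLT_X₃_iff n this).mp (ih _ h)

/-- Comparison of `ModuleCat.localizedModule` with any localization of the module. -/
def locEquiv {R : Type u} [CommRing R] (S : Submonoid R) (X : ModuleCat.{u} R)
    {N : Type u} [AddCommGroup N] [Module R N] [Module (Localization S) N]
    [IsScalarTower R (Localization S) N] (f : X →ₗ[R] N) [IsLocalizedModule S f] :
    X.localizedModule S ≃ₗ[Localization S] N :=
  LinearEquiv.extendScalarsOfIsLocalization S (Localization S)
    (IsLocalizedModule.linearEquiv S (X.localizedModuleMkLinearMap S) f)

lemma finID_localization (R : Type u) [CommRing R] [IsNoetherianRing R] {n : ℕ}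
    (h : idLE R n R) (p : Ideal R) [p.IsPrime] : FinID (Localization.AtPrime p) := by
  have := hasInjDim_of_idLE R n R h
  have h2 := ModuleCat.localizedModule_hasInjectiveDimensionLE n p.primeCompl (ModuleCat.of R R)
  have hl : IsLocalizedModule p.primeCompl (Algebra.linearMap R (Localization p.primeCompl)) :=
    inferInstance
  let e : ((ModuleCat.of R R).localizedModule p.primeCompl) ≃ₗ[Localization p.primeCompl]
      (ModuleCat.of (Localization p.primeCompl) (Localization p.primeCompl)) :=
    @locEquiv R _ p.primeCompl (ModuleCat.of R R) (Localization p.primeCompl) _ _ _ _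
      (Algebra.linearMap R (Localization p.primeCompl)) hl
  have h3 := (ModuleCat.hasInjectiveDimensionLE_iff_of_linearEquiv e n).mp h2
  exact ⟨n + 1, fun i hi N _ _ => HasInjectiveDimensionLT.subsingleton _ (n + 1) i hi _⟩

section serre
variable {R : Type u} [CommRing R]

/-- A weakly regular sequence of length `k` extracted from a lower bound on `rdepth`. -/
lemma exists_seq_of_le_rdepth {A N : Type u} [CommRing A] [AddCommGroup N] [Module A N] (k : ℕ)
    (h : (k + 1 : ℕ) ≤ rdepth A N) :
    ∃ rs : List A, k + 1 ≤ rs.length ∧ (∀ r ∈ rs, r ∈ nonunits A) ∧ IsWeaklyRegular N rs := by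
  by_contra! hc
  have : rdepth A N ≤ (k : ℕ) := by
    apply sSup_le
    rintro _ ⟨rs, rfl, h1, h2⟩
    by_contra h3
    refine hc rs ?_ h1 h2
    have : ¬ rs.length ≤ k := by exact_mod_cast h3
    omega
  have := h.trans this
  have : k + 1 ≤ k := by exact_mod_cast this
  omega

lemma exists_seq_of_serre {M : Type u} [AddCommGroup M] [Module R M] (hS : SerreCond R M 2)
    (p : Ideal R) [hp : p.IsPrime] (k : ℕ) (hk : k + 1 ≤ 2)
    (hh : ((k + 1 : ℕ) : ℕ∞) ≤ Order.height (⟨p, hp⟩ : PrimeSpectrum R)) :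
    ∃ rs : List (Localization.AtPrime p), k + 1 ≤ rs.length ∧
      (∀ r ∈ rs, r ∈ nonunits (Localization.AtPrime p)) ∧
      IsWeaklyRegular (LocalizedModule p.primeCompl M) rs := by
  by_cases hn : Nontrivial (LocalizedModule p.primeCompl M)
  · apply exists_seq_of_le_rdepth
    refine le_trans (le_min ?_ hh) (hS p hp hn)
    exact_mod_cast hk
  · rw [not_nontrivial_iff_subsingleton] at hn
    refine ⟨List.replicate (k + 1) 0, by simp, fun r hr => ?_, ?_⟩
    · rw [List.eq_of_mem_replicate hr]
      exact zero_mem_nonunits.mpr zero_ne_one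
    · rw [isWeaklyRegular_iff]
      intro i hi a b _
      have : Subsingleton (LocalizedModule p.primeCompl M ⧸
        (Ideal.ofList ((List.replicate (k + 1) (0 : Localization.AtPrime p)).take i) •
          (⊤ : Submodule (Localization.AtPrime p) (LocalizedModule p.primeCompl M)))) :=
          inferInstance
      exact Subsingleton.elim a b

/-- Height zero: the local ring has a socle. -/
lemma soc_of_height_zero [IsNoetherianRing R] (p : Ideal R) [hp : p.IsPrime]
    (h : Order.height (⟨p, hp⟩ : PrimeSpectrum R) = 0) :
    Soc (Localization.AtPrime p) (Localization.AtPrime p) := by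
  refine soc_of_prime_eq ?_
  intro q hq _
  have hle := le_maximalIdeal hq.ne_top
  rw [Order.height_eq_zero] at h
  have hqp : q.comap (algebraMap R _) ≤ p := by
    exact (Ideal.comap_mono hle).trans (Localization.AtPrime.under_maximalIdeal (I := p)).le
  have := h (b := ⟨q.comap (algebraMap R _), Ideal.comap_isPrime _ _⟩) hqp
  have h2 : (maximalIdeal (Localization.AtPrime p)).comap (algebraMap R _) ≤
      q.comap (algebraMap R _) := by
    exact (Localization.AtPrime.under_maximalIdeal (I := p)).le.trans this
  refine le_antisymm hle ?_
  rw [← IsLocalization.map_under p.primeCompl (Localization.AtPrime p) (maximalIdeal _)]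
  exact Ideal.map_le_iff_le_comap.mpr h2

/-- Height at most one: non-maximal primes of the localization are minimal. -/
lemma minimal_of_height_le_one (p : Ideal R) [hp : p.IsPrime]
    (h : Order.height (⟨p, hp⟩ : PrimeSpectrum R) ≤ 1)
    (q : Ideal (Localization.AtPrime p)) (hq : q.IsPrime) (hne : q ≠ maximalIdeal _) :
    q ∈ minimalPrimes (Localization.AtPrime p) := by
  have hlt : q < maximalIdeal _ := lt_of_le_of_ne (le_maximalIdeal hq.ne_top) hne
  refine ⟨⟨hq, bot_le⟩, ?_⟩
  rintro q' ⟨hq', -⟩ hle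
  by_contra hc
  have key : ∀ I J : Ideal (Localization.AtPrime p), I.comap (algebraMap R _) ≤
      J.comap (algebraMap R _) → I ≤ J := by
    intro I J hIJ
    rw [← IsLocalization.map_under p.primeCompl (Localization.AtPrime p) I]
    exact Ideal.map_le_iff_le_comap.mpr hIJ
  let P : PrimeSpectrum R := ⟨p, hp⟩
  let Q : PrimeSpectrum R := ⟨q.comap (algebraMap R _), Ideal.comap_isPrime _ _⟩
  let Q' : PrimeSpectrum R := ⟨q'.comap (algebraMap R _), Ideal.comap_isPrime _ _⟩
  have hpm := Localization.AtPrime.under_maximalIdeal (I := p)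
  have h1 : Q < P := by
    refine lt_of_le_not_ge ?_ ?_
    · exact (Ideal.comap_mono hlt.le).trans hpm.le
    · intro hge
      exact hlt.not_ge (key _ _ (hpm.le.trans hge))
  have h2 : Q' < Q := lt_of_le_not_ge (Ideal.comap_mono hle) (fun hge => hc (key _ _ hge))
  have h3 : Order.height Q + 1 ≤ Order.height P := Order.height_add_one_le h1
  have h4 : Order.height Q' + 1 ≤ Order.height Q := Order.height_add_one_le h2
  have h5 : (1 : ℕ∞) + 1 ≤ 1 :=
    (add_le_add_left (le_add_self.trans h4) 1).trans (h3.trans h)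
  exact absurd h5 (by decide)

/-- Height at least one: no socle, if the injective dimension is finite. -/
lemma not_soc_of_height [IsNoetherianRing R] (p : Ideal R) [hp : p.IsPrime]
    (hA : FinID (Localization.AtPrime p))
    (h : 1 ≤ Order.height (⟨p, hp⟩ : PrimeSpectrum R)) :
    ¬ Soc (Localization.AtPrime p) (Localization.AtPrime p) := by
  intro hs
  have hmin : IsMin (⟨p, hp⟩ : PrimeSpectrum R) := by
    intro Q hQ
    have hQp : Q.asIdeal ≤ p := hQ
    have hdisj : Disjoint (p.primeCompl : Set R) Q.asIdeal := by
      rw [Set.disjoint_left]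
      exact fun a ha hQ => ha (hQp hQ)
    have hprime := IsLocalization.isPrime_of_isPrime_disjoint p.primeCompl
      (Localization.AtPrime p) Q.asIdeal Q.2 hdisj
    have heq := prime_eq_of_soc hA hs _ hprime
    have := IsLocalization.under_map_of_isPrime_disjoint p.primeCompl
      (Localization.AtPrime p) Q.2 hdisj
    rw [heq, Localization.AtPrime.under_maximalIdeal] at this
    exact this.le
  rw [← Order.height_eq_zero] at hmin
  rw [hmin] at h
  exact absurd h (by decide)

end serre

end Stmt15


namespace Stmt15

open IsLocalRing

section hom
variable {R : Type u} [CommRing R]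

lemma exists_common (S : Submonoid R) {N K : Type u} [AddCommGroup N] [Module R N]
    [AddCommGroup K] [Module R K] [Module.Finite R N] (f : N →ₗ[R] K)
    (h : ∀ n, ∃ t ∈ S, t • f n = 0) : ∃ t ∈ S, ∀ n, t • f n = 0 := by
  classical
  obtain ⟨s, hs⟩ := Module.Finite.fg_top (R := R) (M := N)
  choose t ht h0 using h
  refine ⟨∏ n ∈ s, t n, S.prod_mem fun n _ => ht n, fun n => ?_⟩
  have hle : (⊤ : Submodule R N) ≤ LinearMap.ker ((∏ n ∈ s, t n) • f) := by
    rw [← hs, Submodule.span_le]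
    intro m hm
    simp only [SetLike.mem_coe, LinearMap.mem_ker, LinearMap.smul_apply]
    rw [← Finset.prod_erase_mul s t hm, mul_smul, h0, smul_zero]
  exact hle (Submodule.mem_top (x := n))

variable [IsNoetherianRing R] {M : Type u} [AddCommGroup M] [Module R M] [Module.Finite R M]
  (P : Ideal R) [P.IsPrime]

/-- Localization of functionals. -/
def lam : (M →ₗ[R] R) →ₗ[R]
    (LocalizedModule P.primeCompl M →ₗ[R] Localization.AtPrime P) :=
  IsLocalizedModule.map P.primeCompl (LocalizedModule.mkLinearMap P.primeCompl M)
    (Algebra.linearMap R (Localization.AtPrime P))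

instance lam_isLocalizedModule : IsLocalizedModule P.primeCompl (lam (M := M) P) := by
  have : Module.FinitePresentation R M := Module.finitePresentation_of_finite R M
  unfold lam
  infer_instance

lemma lam_apply (φ : M →ₗ[R] R) (m : M) :
    lam P φ (LocalizedModule.mkLinearMap P.primeCompl M m) =
      algebraMap R (Localization.AtPrime P) (φ m) := by
  unfold lam
  rw [IsLocalizedModule.map_apply]
  rfl

/-- If the localization is torsionless, the kernel of biduality dies in it. -/
lemma mk_eq_zero_of_inj
    (hb : Function.Injective (Module.Dual.eval (Localization.AtPrime P)
      (LocalizedModule P.primeCompl M))) (k : M) (hk : ∀ φ : M →ₗ[R] R, φ k = 0) :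
    LocalizedModule.mkLinearMap P.primeCompl M k = 0 := by
  apply hb
  rw [map_zero]
  ext ψ
  obtain ⟨⟨φ, s⟩, h⟩ := IsLocalizedModule.surj P.primeCompl (lam (M := M) P) (ψ.restrictScalars R)
  have h1 := LinearMap.congr_fun h (LocalizedModule.mkLinearMap P.primeCompl M k)
  rw [lam_apply, hk, map_zero] at h1
  have h2 : algebraMap R (Localization.AtPrime P) s *
      ψ (LocalizedModule.mkLinearMap P.primeCompl M k) = 0 := by
    rw [← Algebra.smul_def]
    exact h1
  exact (IsLocalization.map_units (Localization.AtPrime P) s).mul_right_eq_zero.mp h2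

/-- If biduality is onto after localization, it is onto up to a denominator. -/
lemma exists_of_surj
    (hb : Function.Surjective (Module.Dual.eval (Localization.AtPrime P)
      (LocalizedModule P.primeCompl M))) (c : Module.Dual R (Module.Dual R M)) :
    ∃ t ∈ P.primeCompl, ∃ m : M, t • c = Module.Dual.eval R M m := by
  have hu : ∀ x : P.primeCompl,
      IsUnit (algebraMap R (Module.End R (Localization.AtPrime P)) x) :=
    IsLocalizedModule.map_units (Algebra.linearMap R (Localization.AtPrime P))
  let c1 : (LocalizedModule P.primeCompl M →ₗ[R] Localization.AtPrime P) →ₗ[R]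
      Localization.AtPrime P :=
    IsLocalizedModule.lift P.primeCompl (lam (M := M) P)
      ((Algebra.linearMap R (Localization.AtPrime P)).comp c) hu
  let r : Module.Dual (Localization.AtPrime P) (LocalizedModule P.primeCompl M) →ₗ[R]
      (LocalizedModule P.primeCompl M →ₗ[R] Localization.AtPrime P) :=
    { toFun := fun ψ => ψ.restrictScalars R
      map_add' := fun _ _ => rfl
      map_smul' := fun _ _ => rfl }
  let C : Module.Dual (Localization.AtPrime P)
      (Module.Dual (Localization.AtPrime P) (LocalizedModule P.primeCompl M)) :=
    LinearMap.extendScalarsOfIsLocalization P.primeCompl (Localization.AtPrime P) (c1.comp r)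
  obtain ⟨l, hl⟩ := hb C
  obtain ⟨⟨m, s⟩, hm⟩ := IsLocalizedModule.surj P.primeCompl
    (LocalizedModule.mkLinearMap P.primeCompl M) l
  have key : ∀ φ : Module.Dual R M,
      algebraMap R (Localization.AtPrime P) (s * c φ) = algebraMap R _ (φ m) := by
    intro φ
    let ψ : Module.Dual (Localization.AtPrime P) (LocalizedModule P.primeCompl M) :=
      LinearMap.extendScalarsOfIsLocalization P.primeCompl (Localization.AtPrime P) (lam P φ)
    have h1 : C ψ = algebraMap R (Localization.AtPrime P) (c φ) :=
      IsLocalizedModule.lift_apply P.primeCompl (lam (M := M) P)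
        ((Algebra.linearMap R (Localization.AtPrime P)).comp c) hu φ
    have h2 : ψ l = C ψ := by rw [← hl]; rfl
    have h3 : lam P φ ((s : R) • l) = algebraMap R _ (φ m) := by
      rw [← lam_apply]
      exact congrArg _ hm
    rw [map_smul, Algebra.smul_def] at h3
    rw [map_mul, ← h3, ← h1, ← h2]
    rfl
  obtain ⟨t, ht, h⟩ := exists_common P.primeCompl ((s : R) • c - Module.Dual.eval R M m)
    (fun φ => by
      obtain ⟨t, ht⟩ := (IsLocalization.eq_iff_exists P.primeCompl _).mp (key φ)
      refine ⟨t, t.2, ?_⟩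
      simp only [LinearMap.sub_apply, LinearMap.smul_apply, smul_eq_mul, Module.Dual.eval_apply,
        mul_sub]
      rw [ht, sub_self])
  refine ⟨t * s, mul_mem ht s.2, t • m, ?_⟩
  ext φ
  have := h φ
  simp only [LinearMap.sub_apply, LinearMap.smul_apply, smul_eq_mul, Module.Dual.eval_apply,
    mul_sub, sub_eq_zero] at this
  simp only [LinearMap.smul_apply, smul_eq_mul, Module.Dual.eval_apply, map_smul]
  rw [mul_assoc, this]

end hom

section main
variable {R : Type u} [CommRing R] [IsNoetherianRing R]
  {M : Type u} [AddCommGroup M] [Module R M] [Module.Finite R M]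

lemma exists_regular_one (hS : SerreCond R M 2) (P : Ideal R) [hP : P.IsPrime]
    (h : 1 ≤ Order.height (⟨P, hP⟩ : PrimeSpectrum R)) :
    ∃ x ∈ maximalIdeal (Localization.AtPrime P),
      IsSMulRegular (LocalizedModule P.primeCompl M) x := by
  obtain ⟨rs, h1, h2, h3⟩ := exists_seq_of_serre hS P 0 (by norm_num) (by exact_mod_cast h)
  match rs, h1, h2, h3 with
  | x :: xs, _, h2, h3 =>
    exact ⟨x, (mem_maximalIdeal _).mpr (h2 x (by simp)), ((isWeaklyRegular_cons_iff _ _ _).mp h3).1⟩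

lemma bijective_of_height_le_one {n : ℕ} (hG : idLE R n R) (hS : SerreCond R M 2)
    (P : Ideal R) [hP : P.IsPrime] (h : Order.height (⟨P, hP⟩ : PrimeSpectrum R) ≤ 1) :
    Function.Bijective (Module.Dual.eval (Localization.AtPrime P)
      (LocalizedModule P.primeCompl M)) := by
  refine isReflexive_dim_one (finID_localization R hG P) (minimal_of_height_le_one P h) _ ?_
  intro hs
  refine exists_regular_one hS P ?_
  rw [Order.one_le_iff_ne_zero]
  exact fun h0 => hs (soc_of_height_zero P h0)

lemma dualEval_injective {n : ℕ} (hG : idLE R n R) (hS : SerreCond R M 2) :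
    Function.Injective (Module.Dual.eval R M) := by
  rw [← LinearMap.ker_eq_bot]
  by_contra hne
  have : Nontrivial (LinearMap.ker (Module.Dual.eval R M)) :=
    Submodule.nontrivial_iff_ne_bot.mpr hne
  obtain ⟨P, hP⟩ := associatedPrimes.nonempty R (LinearMap.ker (Module.Dual.eval R M))
  obtain ⟨hPp, g, hg⟩ := (isAssociatedPrime_iff_exists_injective_linearMap P _).mp hP
  let k : M := (g (Submodule.Quotient.mk 1) : LinearMap.ker (Module.Dual.eval R M))
  have hk : ∀ a : R, a • k = 0 ↔ a ∈ P := by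
    intro a
    have : a • k = (g (Submodule.Quotient.mk a) : LinearMap.ker (Module.Dual.eval R M)) := by
      have h1 : (Submodule.Quotient.mk a : R ⧸ P) = a • Submodule.Quotient.mk 1 := by
        rw [← Submodule.Quotient.mk_smul, smul_eq_mul, mul_one]
      rw [h1, map_smul]; rfl
    rw [this, ZeroMemClass.coe_eq_zero, map_eq_zero_iff g hg]
    exact Submodule.Quotient.mk_eq_zero P
  have hk0 : ∀ φ : M →ₗ[R] R, φ k = 0 := fun φ =>
    LinearMap.congr_fun (LinearMap.mem_ker.mp (g (Submodule.Quotient.mk 1)).2) φ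
  have hmk : LocalizedModule.mkLinearMap P.primeCompl M k ≠ 0 := by
    intro h
    obtain ⟨s, hs⟩ := (IsLocalizedModule.eq_zero_iff P.primeCompl _).mp h
    exact s.2 ((hk s).mp hs)
  by_cases hh : 1 ≤ Order.height (⟨P, hPp⟩ : PrimeSpectrum R)
  · obtain ⟨x, hx, hr⟩ := exists_regular_one hS P hh
    apply hmk
    apply hr
    show x • _ = x • (0 : LocalizedModule P.primeCompl M)
    rw [smul_zero]
    rw [← Localization.AtPrime.map_eq_maximalIdeal] at hx
    refine Submodule.span_induction ?_ ?_ ?_ ?_ hx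
    · rintro _ ⟨a, ha, rfl⟩
      rw [algebraMap_smul, ← map_smul, (hk a).mpr ha, map_zero]
    · rw [zero_smul]
    · intro a b _ _ ha hb
      rw [add_smul, ha, hb, add_zero]
    · intro a b _ hb
      rw [smul_assoc, hb, smul_zero]
  · exact hmk (mk_eq_zero_of_inj P
      (bijective_of_height_le_one hG hS P (not_le.mp hh).le).1 k hk0)

/-- In height at least two: elements of `P` regular on the localized module, unfolded. -/
lemma exists_pair (hS : SerreCond R M 2) (P : Ideal R) [hP : P.IsPrime]
    (h : 2 ≤ Order.height (⟨P, hP⟩ : PrimeSpectrum R)) :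
    ∃ x ∈ P, ∃ y ∈ P, (∀ m : M, x • m = 0 → ∃ t ∈ P.primeCompl, t • m = 0) ∧
      (∀ u v : M, y • u = x • v → ∃ t ∈ P.primeCompl, ∃ w : M, t • u = x • w) := by
  obtain ⟨rs, h1, h2, h3⟩ := exists_seq_of_serre hS P 1 (by norm_num) (by exact_mod_cast h)
  match rs, h1, h2, h3 with
  | x :: y :: xs, _, h2, h3 =>
    obtain ⟨hx, h3⟩ := (isWeaklyRegular_cons_iff _ _ _).mp h3
    obtain ⟨hy, -⟩ := (isWeaklyRegular_cons_iff _ _ _).mp h3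
    obtain ⟨⟨x', s⟩, hx'⟩ := IsLocalization.surj P.primeCompl x
    obtain ⟨⟨y', s'⟩, hy'⟩ := IsLocalization.surj P.primeCompl y
    dsimp only at hx' hy'
    have mem : ∀ (z : Localization.AtPrime P) (z' : R) (s : P.primeCompl), z ∈ nonunits _ →
        z * algebraMap R _ (s : R) = algebraMap R _ z' → z' ∈ P := by
      intro z z' s hz h
      by_contra hc
      have := IsLocalization.map_units (Localization.AtPrime P) (⟨z', hc⟩ : P.primeCompl)
      rw [← h] at this
      exact hz (isUnit_of_mul_isUnit_left this)
    let ι := LocalizedModule.mkLinearMap P.primeCompl M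
    have hs := IsLocalization.map_units (Localization.AtPrime P) s
    have hs' := IsLocalization.map_units (Localization.AtPrime P) s'
    have ex : ∀ m : LocalizedModule P.primeCompl M,
        x' • m = x • (algebraMap R (Localization.AtPrime P) s) • m := by
      intro m
      rw [smul_smul, hx', algebraMap_smul]
    have ey : ∀ m : LocalizedModule P.primeCompl M,
        y' • m = (algebraMap R (Localization.AtPrime P) s') • y • m := by
      intro m
      rw [smul_smul, mul_comm, hy', algebraMap_smul]
    refine ⟨x', mem x x' s (h2 x (by simp)) hx', y', mem y y' s' (h2 y (by simp)) hy', ?_, ?_⟩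
    · intro m hm
      have h4 : x • (algebraMap R (Localization.AtPrime P) s) • ι m = 0 := by
        rw [← ex, ← map_smul, hm, map_zero]
      have h5 := hx.right_eq_zero_of_smul h4
      have h6 := (hs.smul_eq_zero).mp h5
      obtain ⟨t, ht⟩ := (IsLocalizedModule.eq_zero_iff P.primeCompl ι).mp h6
      exact ⟨t, t.2, ht⟩
    · intro u v huv
      have h4 : (algebraMap R (Localization.AtPrime P) s') • y • ι u =
          x • (algebraMap R (Localization.AtPrime P) s) • ι v := by
        rw [← ex, ← ey, ← map_smul, ← map_smul, huv]
      have h5 : y • (Submodule.Quotient.mk (ι u) : QuotSMulTop x _) = 0 := by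
        rw [← Submodule.Quotient.mk_smul, Submodule.Quotient.mk_eq_zero]
        refine (Submodule.smul_mem_iff_of_isUnit _ hs').mp ?_
        rw [h4]
        exact Submodule.smul_mem_pointwise_smul _ _ _ trivial
      have h6 := hy.right_eq_zero_of_smul h5
      rw [Submodule.Quotient.mk_eq_zero] at h6
      obtain ⟨l, -, hl⟩ := h6
      have hl : x • l = ι u := hl
      obtain ⟨⟨w, q⟩, hw⟩ := IsLocalizedModule.surj P.primeCompl ι l
      have hw : (q : R) • l = ι w := hw
      have h7 : ι ((q * s : R) • u) = ι (x' • w) := by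
        rw [map_smul, map_smul, ← hl, ex, ← hw, mul_comm, mul_smul, algebraMap_smul,
          smul_comm x (s : R), smul_comm x (q : R)]
      obtain ⟨t, ht⟩ := (IsLocalizedModule.eq_iff_exists P.primeCompl ι).mp h7
      have ht : (t : R) • (q * s : R) • u = (t : R) • x' • w := ht
      refine ⟨t * (q * s), mul_mem t.2 (mul_mem q.2 s.2), (t : R) • w, ?_⟩
      rw [mul_smul, ht, smul_comm]

lemma dualEval_surjective {n : ℕ} (hG : idLE R n R) (hS : SerreCond R M 2) :
    Function.Surjective (Module.Dual.eval R M) := by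
  have hinj := dualEval_injective hG hS
  set e := Module.Dual.eval R M with he
  rw [← LinearMap.range_eq_top]
  by_contra hne
  have : Nontrivial (Module.Dual R (Module.Dual R M) ⧸ LinearMap.range e) :=
    Submodule.Quotient.nontrivial_iff.mpr hne
  obtain ⟨P, hP⟩ := associatedPrimes.nonempty R
    (Module.Dual R (Module.Dual R M) ⧸ LinearMap.range e)
  obtain ⟨hPp, g, hg⟩ := (isAssociatedPrime_iff_exists_injective_linearMap P _).mp hP
  obtain ⟨c, hc⟩ := Submodule.mkQ_surjective _ (g (Submodule.Quotient.mk 1))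
  have hk : ∀ a : R, (∃ m, e m = a • c) ↔ a ∈ P := by
    intro a
    have h1 : (Submodule.Quotient.mk a : R ⧸ P) = a • Submodule.Quotient.mk 1 := by
      rw [← Submodule.Quotient.mk_smul, smul_eq_mul, mul_one]
    have h2 : (LinearMap.range e).mkQ (a • c) = g (Submodule.Quotient.mk a) := by
      rw [h1, map_smul, map_smul, hc]
    rw [← LinearMap.mem_range, ← Submodule.Quotient.mk_eq_zero, ← Submodule.mkQ_apply, h2,
      map_eq_zero_iff g hg]
    exact Submodule.Quotient.mk_eq_zero P
  by_cases hh : Order.height (⟨P, hPp⟩ : PrimeSpectrum R) ≤ 1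
  · obtain ⟨t, ht, m, hm⟩ := exists_of_surj P (bijective_of_height_le_one hG hS P hh).2 c
    exact ht ((hk t).mp ⟨m, hm.symm⟩)
  · have hh2 : 2 ≤ Order.height (⟨P, hPp⟩ : PrimeSpectrum R) := by
      have := Order.add_one_le_of_lt (not_le.mp hh)
      rwa [one_add_one_eq_two] at this
    obtain ⟨x, hx, y, hy, hreg, hreg2⟩ := exists_pair hS P hh2
    obtain ⟨u, hu⟩ := (hk x).mpr hx
    obtain ⟨v, hv⟩ := (hk y).mpr hy
    obtain ⟨t, ht, w, hw⟩ := hreg2 u v (hinj (by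
      rw [map_smul, map_smul, hu, hv, smul_comm]))
    -- the corrected element is killed by `P` up to a denominator
    obtain ⟨t', ht', hd⟩ := exists_common P.primeCompl
      ((LinearMap.toSpanSingleton R _ (t • c - e w)).comp P.subtype) (by
        rintro ⟨a, ha⟩
        obtain ⟨z, hz⟩ := (hk a).mpr ha
        have h1 : x • (t • z - a • w) = 0 := by
          apply hinj
          rw [map_zero, map_smul, map_sub, map_smul, hz, smul_sub, ← map_smul e x, smul_comm x a,
            ← hw, map_smul, map_smul, hu, smul_comm t a c, smul_comm t x c, smul_comm x a,
            sub_self]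
        obtain ⟨s, hs, h2⟩ := hreg _ h1
        refine ⟨s, hs, ?_⟩
        have h3 : a • (t • c - e w) = e (t • z - a • w) := by
          rw [map_sub, map_smul, map_smul, hz, smul_sub, smul_comm]
        show s • a • (t • c - e w) = 0
        rw [h3, ← map_smul, h2, map_zero])
    have hns := not_soc_of_height P (finID_localization R hG P) (one_le_two.trans hh2)
    obtain ⟨t'', ht'', hd'⟩ := exists_common P.primeCompl (t' • (t • c - e w)) (by
      intro φ
      have h0 : algebraMap R (Localization.AtPrime P) ((t' • (t • c - e w)) φ) = 0 := by
        by_contra hc0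
        refine hns ⟨_, hc0, fun a ha => ?_⟩
        rw [← Localization.AtPrime.map_eq_maximalIdeal] at ha
        refine Submodule.span_induction ?_ ?_ ?_ ?_ ha
        · rintro _ ⟨a, ha, rfl⟩
          have h1 : a * (t' • (t • c - e w)) φ = 0 := by
            have h2 : t' • a • (t • c - e w) = 0 := hd ⟨a, ha⟩
            rw [smul_comm] at h2
            exact LinearMap.congr_fun h2 φ
          rw [smul_eq_mul, ← map_mul, h1, map_zero]
        · rw [zero_smul]
        · intro a b _ _ ha hb
          rw [add_smul, ha, hb, add_zero]
        · intro a b _ hb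
          rw [smul_assoc, hb, smul_zero]
      obtain ⟨s, hs⟩ := (IsLocalization.map_eq_zero_iff P.primeCompl _ _).mp h0
      exact ⟨s, s.2, hs⟩)
    have hmem : t'' * (t' * t) ∈ P := by
      refine (hk _).mp ⟨t'' • t' • w, ?_⟩
      ext φ
      have := hd' φ
      rw [map_smul, map_smul]
      simp only [LinearMap.sub_apply, LinearMap.smul_apply, smul_eq_mul, mul_sub,
        sub_eq_zero] at this ⊢
      rw [← this, mul_assoc, mul_assoc]
    exact (mul_mem ht'' (mul_mem ht' ht) : _ ∈ P.primeCompl) hmem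

end main

end Stmt15


/-- over a Gorenstein local ring, `(S_2)` implies reflexive. -/
theorem stmt15 (R : Type u) [CommRing R] (hG : IsGorensteinLocalRing R)
    (M : Type u) [AddCommGroup M] [Module R M] [Module.Finite R M]
    (hS2 : SerreCond R M 2) :
    Module.IsReflexive R M := by
  obtain ⟨hN, -, n, hn⟩ := hG
  exact ⟨Stmt15.dualEval_injective hn hS2, Stmt15.dualEval_surjective hn hS2⟩

end
end
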